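/- arXiv:2002.00465 — 7 statements merged into one kernel-verified Lean document; each statement's English description precedes it below -/
import Mathlib

section
/- For all real x > 1 and δ ∈ ℝ with x+δ > 1: Γ(x+δ)/Γ(x) > e^{-δ}·(1+δ/x)^{x+δ-ξ}·x^{1/2+δ-ξ}, where ξ is the Euler–Mascheroni constant. -/
open Real MeasureTheory Set Filter

/-- Normalizing factor `δ'_n(β,γ)` for the orthonormal Jacobi polynomials. -/
noncomputable def jacobiDelta (β γ : ℝ) (n : ℕ) : ℝ :=
  Real.sqrt ((β + γ + 2 * n + 1) * Real.Gamma (β + γ + n + 1) /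
    (n.factorial * Real.Gamma (β + n + 1) * Real.Gamma (γ + n + 1)))

/-- The orthonormal Jacobi polynomial `p_n^{(β,γ)}` on `(a,b)`. -/
noncomputable def jacobiP (a b β γ : ℝ) (n : ℕ) (x : ℝ) : ℝ :=
  (-1 : ℝ) ^ n * (b - a) ^ (-(n : ℝ) - (β + γ + 1) / 2) * jacobiDelta β γ n *
    (x - a) ^ (-β) * (b - x) ^ (-γ) *
    iteratedDeriv n (fun t : ℝ => (t - a) ^ (β + n) * (b - t) ^ (γ + n)) x

/-- Generalized binomial coefficient `binom(x, j) = Γ(x+1)/(j!·Γ(x-j+1))`. -/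
noncomputable def genBinom (x : ℝ) (j : ℕ) : ℝ :=
  Real.Gamma (x + 1) / (j.factorial * Real.Gamma (x - j + 1))

/-- The coefficient `C̃_n^k(β,γ)`. -/
noncomputable def Ctilde (β γ : ℝ) (n k : ℕ) : ℝ :=
  ∑ i ∈ Finset.range (k + 1),
    (n.choose i : ℝ) * genBinom ((n : ℝ) + β) (n - i) * genBinom ((n : ℝ) + γ) i *
      (k.choose i : ℝ) * genBinom ((n : ℝ) - i) (k - i) * (i.factorial : ℝ)

/-- The Euler Beta function `B(x,y) = Γ(x)Γ(y)/Γ(x+y)`. -/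
noncomputable def betaB (x y : ℝ) : ℝ := Real.Gamma x * Real.Gamma y / Real.Gamma (x + y)

/-- The matrix coefficients `A^{α,β,γ}_{mn}`. -/
noncomputable def Acoef (α β γ : ℝ) (m n : ℕ) : ℝ :=
  jacobiDelta β γ m * jacobiDelta β γ n *
    ∑ k ∈ Finset.range (n + 1),
      (-1 : ℝ) ^ k * Ctilde β γ n k * betaB (α + β + k + 1) (γ + m + 1) /
        Real.Gamma ((k : ℝ) + α - m + 1)

/-- The coefficient `c_n = δ'_n·n!·Γ(n+β+1)·Γ(n+γ+1)/4^n`. -/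
noncomputable def cCoef (β γ : ℝ) (n : ℕ) : ℝ :=
  jacobiDelta β γ n * n.factorial * Real.Gamma (n + β + 1) * Real.Gamma (n + γ + 1) / 4 ^ n

/-- The weighted `L_p` norm `‖f‖_{L_p(I,ω)}` with `ω(x) = (x-a)^β (b-x)^γ`, `I = (a,b)`. -/
noncomputable def wnorm (a b β γ p : ℝ) (f : ℝ → ℝ) : ℝ :=
  (∫ x in Set.Ioo a b, |f x| ^ p * ((x - a) ^ β * (b - x) ^ γ)) ^ (1 / p)

/-- Membership in the weighted Lebesgue space `L_p(I,ω)`. -/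
def MemWLp (a b β γ p : ℝ) (f : ℝ → ℝ) : Prop :=
  MeasurableSet (Set.Ioo a b) ∧
    IntegrableOn (fun x : ℝ => |f x| ^ p * ((x - a) ^ β * (b - x) ^ γ)) (Set.Ioo a b)

/-- The right-sided Riemann–Liouville fractional integral `I^μ_{b-}`. -/
noncomputable def fracIntR (b μ : ℝ) (f : ℝ → ℝ) (x : ℝ) : ℝ :=
  (1 / Real.Gamma μ) * ∫ t in Set.Ioo x b, f t * (t - x) ^ (μ - 1)

/-- The left-sided Riemann–Liouville fractional integral `I^μ_{a+}`. -/
noncomputable def fracIntL (a μ : ℝ) (f : ℝ → ℝ) (x : ℝ) : ℝ :=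
  (1 / Real.Gamma μ) * ∫ t in Set.Ioo a x, f t * (x - t) ^ (μ - 1)

/-- The right-sided Riemann–Liouville fractional derivative `D^μ_{b-}`. -/
noncomputable def fracDerR (b μ : ℝ) (f : ℝ → ℝ) (x : ℝ) : ℝ :=
  - deriv (fun y : ℝ => fracIntR b (1 - μ) f y) x

/-- Jacobi coefficients `f_n` of a function `f`. -/
noncomputable def jacobiCoef (a b β γ : ℝ) (f : ℝ → ℝ) (n : ℕ) : ℝ :=
  ∫ x in Set.Ioo a b, f x * jacobiP a b β γ n x * ((x - a) ^ β * (b - x) ^ γ)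

/-- Partial sums `S_k f` of the Jacobi series of `f`. -/
noncomputable def jacobiPartial (a b β γ : ℝ) (f : ℝ → ℝ) (k : ℕ) (x : ℝ) : ℝ :=
  ∑ n ∈ Finset.range (k + 1), jacobiCoef a b β γ f n * jacobiP a b β γ n x

open Asymptotics

open scoped Topology

/-!
The quotient estimate divides the lower bound `x ^ (x - ξ) / exp (x - 1) < Γ x` at `x + δ` by the
upper bound `Γ x < x ^ (x - 1 / 2) / exp (x - 1)` at `x`. Let `ψ` be the digamma function and
`Φ x = x (log x - ψ x)`. The logarithm of `x ^ (x - c) / exp (x - 1) / Γ x` vanishes at `x = 1` and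
has derivative `(Φ x - c) / x`, so both bounds follow from `1 / 2 < Φ x < ξ` for `x > 1`. Here
`ξ = Φ 1`, `1 / 2` is the limit of `Φ` at infinity, and `Φ` is strictly decreasing.

Convexity of `log Γ` gives `log x - ψ x → 0` at infinity. All finer estimates come from
`ψ (x + 1) = ψ x + 1 / x` by descent along `x, x + 1, x + 2, …`: a function with a limit at infinity
is strictly decreasing as soon as its difference `f x - f (x + 1)` is. For `Φ` this is applied
twice, because the second difference no longer involves `ψ`.
-/

lemma lt_of_tendsto_of_forall_add_one_lt {f : ℝ → ℝ} {a L x : ℝ}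
    (hf : ∀ y, a < y → f (y + 1) < f y) (hlim : Tendsto f atTop (𝓝 L)) (hx : a < x) :
    L < f x := by
  have hanti : Antitone fun n : ℕ => f (x + 1 + n) := by
    refine antitone_nat_of_succ_le fun n => ?_
    have hn : a < x + 1 + n := by linarith [n.cast_nonneg (α := ℝ)]
    simpa only [Nat.cast_add, Nat.cast_one, ← add_assoc] using (hf _ hn).le
  have hseq : Tendsto (fun n : ℕ => f (x + 1 + n)) atTop (𝓝 L) :=
    hlim.comp (tendsto_atTop_add_const_left _ _ tendsto_natCast_atTop_atTop)
  calc
    L ≤ f (x + 1) := by simpa using hanti.le_of_tendsto hseq 0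
    _ < f x := hf x hx

lemma strictAntiOn_of_strictAntiOn_sub_add_one {f : ℝ → ℝ} {a L : ℝ}
    (hf : StrictAntiOn (fun x => f x - f (x + 1)) (Ioi a)) (hlim : Tendsto f atTop (𝓝 L)) :
    StrictAntiOn f (Ioi a) := by
  intro x hx y _ hxy
  have hdesc : ∀ t, a < t →
      f (t + 1) - f (t + 1 + (y - x)) < f t - f (t + (y - x)) := by
    intro t ht
    have hshift : f (t + (y - x)) - f (t + (y - x) + 1) < f t - f (t + 1) :=
      hf ht (mem_Ioi.2 (by linarith)) (by linarith)
    rw [add_right_comm t 1]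
    linarith
  have hzero : Tendsto (fun t => f t - f (t + (y - x))) atTop (𝓝 0) := by
    simpa only [sub_self, Function.comp_def, id] using
      hlim.sub (hlim.comp (tendsto_atTop_add_const_right _ (y - x) tendsto_id))
  simpa using lt_of_tendsto_of_forall_add_one_lt hdesc hzero hx

lemma log_add_one_sub_log_lt_trapezoid {y : ℝ} (hy : 0 < y) :
    log (y + 1) - log y < (1 / y + 1 / (y + 1)) / 2 := by
  have hratio : 1 < (y + 1) / y := by rw [one_lt_div hy]; linarith
  calc
    log (y + 1) - log y = log ((y + 1) / y) := (log_div (by positivity) hy.ne').symm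
    _ < sinh (log ((y + 1) / y)) := self_lt_sinh_iff.2 (log_pos hratio)
    _ = (1 / y + 1 / (y + 1)) / 2 := by
      rw [sinh_log (by positivity)]
      field_simp
      ring

lemma one_div_lt_log_add_half_sub_log_sub_half {y : ℝ} (hy : 1 / 2 < y) :
    1 / y < log (y + 1 / 2) - log (y - 1 / 2) := by
  have hpos : 0 < y - 1 / 2 := by linarith
  have hy0 : 0 < y := by linarith
  calc
    1 / y = 2 * (1 / (y - 1 / 2)) / (1 / (y - 1 / 2) + 2) := by
      have hne : y * 2 - 1 ≠ 0 := by linarith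
      field_simp
      ring
    _ < log (1 + 1 / (y - 1 / 2)) := lt_log_one_add_of_pos (by positivity)
    _ = log (y + 1 / 2) - log (y - 1 / 2) := by
      rw [← log_div (add_pos hy0 one_half_pos).ne' hpos.ne', one_add_div hpos.ne']
      congr 2
      ring

/-- The digamma function `ψ = Γ' / Γ` of a real variable, the counterpart of
`Complex.digamma`. -/
noncomputable def realDigamma : ℝ → ℝ := logDeriv Real.Gamma

lemma hasDerivAt_log_Gamma {x : ℝ} (hx : 0 < x) :
    HasDerivAt (fun t => log (Real.Gamma t)) (realDigamma x) x :=
  (differentiableAt_Gamma fun m => by linarith [m.cast_nonneg (α := ℝ)]).hasDerivAt.log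
    (Gamma_pos_of_pos hx).ne'

lemma log_Gamma_add_one {x : ℝ} (hx : 0 < x) :
    log (Real.Gamma (x + 1)) = log x + log (Real.Gamma x) := by
  rw [Gamma_add_one hx.ne', log_mul hx.ne' (Gamma_pos_of_pos hx).ne']

lemma slope_log_Gamma_add_one {x : ℝ} (hx : 0 < x) :
    slope (log ∘ Real.Gamma) x (x + 1) = log x := by
  rw [slope_def_field, Function.comp_apply, Function.comp_apply, log_Gamma_add_one hx]
  ring

lemma realDigamma_one : realDigamma 1 = -eulerMascheroniConstant := by
  rw [realDigamma, logDeriv_apply, Real.hasDerivAt_Gamma_one.deriv, Gamma_one, div_one]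

lemma realDigamma_add_one {x : ℝ} (hx : 0 < x) :
    realDigamma (x + 1) = realDigamma x + 1 / x := by
  have hshift : HasDerivAt (fun t => log (Real.Gamma (t + 1))) (realDigamma (x + 1)) x :=
    (hasDerivAt_log_Gamma (by positivity)).comp_add_const x 1
  have hrec : (fun t => log (Real.Gamma (t + 1))) =ᶠ[𝓝 x]
      fun t => log t + log (Real.Gamma t) := by
    filter_upwards [eventually_gt_nhds hx] with t ht using log_Gamma_add_one ht
  have hsum := ((hasDerivAt_log hx.ne').add (hasDerivAt_log_Gamma hx)).congr_of_eventuallyEq hrec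
  rw [hshift.unique hsum, one_div, add_comm]

lemma realDigamma_le_log {x : ℝ} (hx : 0 < x) : realDigamma x ≤ log x := by
  have hx1 : 0 < x + 1 := by positivity
  calc
    realDigamma x ≤ slope (log ∘ Real.Gamma) x (x + 1) :=
      convexOn_log_Gamma.le_slope_of_hasDerivAt hx hx1 (lt_add_one x) (hasDerivAt_log_Gamma hx)
    _ = log x := slope_log_Gamma_add_one hx

lemma log_le_realDigamma_add_one {x : ℝ} (hx : 0 < x) : log x ≤ realDigamma (x + 1) := by
  have hx1 : 0 < x + 1 := by positivity
  calc
    log x = slope (log ∘ Real.Gamma) x (x + 1) := (slope_log_Gamma_add_one hx).symm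
    _ ≤ realDigamma (x + 1) :=
      convexOn_log_Gamma.slope_le_of_hasDerivAt hx hx1 (lt_add_one x) (hasDerivAt_log_Gamma hx1)

lemma tendsto_log_sub_realDigamma :
    Tendsto (fun x => log x - realDigamma x) atTop (𝓝 0) := by
  have hinv : Tendsto (fun x : ℝ => 1 / x) atTop (𝓝 0) := by
    simpa only [one_div] using tendsto_inv_atTop_zero
  refine tendsto_of_tendsto_of_tendsto_of_le_of_le' tendsto_const_nhds hinv ?_ ?_
  · filter_upwards [eventually_gt_atTop 0] with x hx using sub_nonneg.2 (realDigamma_le_log hx)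
  · filter_upwards [eventually_gt_atTop 0] with x hx
    linarith [log_le_realDigamma_add_one hx, realDigamma_add_one hx]

lemma realDigamma_lt_log_sub_half_inv {x : ℝ} (hx : 0 < x) :
    realDigamma x < log x - 1 / (2 * x) := by
  have hdesc : ∀ y : ℝ, 0 < y → log (y + 1) - realDigamma (y + 1) - 1 / (y + 1) / 2 <
      log y - realDigamma y - 1 / y / 2 := by
    intro y hy
    linarith [log_add_one_sub_log_lt_trapezoid hy, realDigamma_add_one hy]
  have hlim : Tendsto (fun y : ℝ => log y - realDigamma y - 1 / y / 2) atTop (𝓝 0) := by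
    simpa using tendsto_log_sub_realDigamma.sub (tendsto_inv_atTop_zero.div_const (2 : ℝ))
  have hpos := lt_of_tendsto_of_forall_add_one_lt hdesc hlim hx
  rw [mul_comm, ← div_div]
  linarith

lemma log_sub_half_lt_realDigamma {x : ℝ} (hx : 1 / 2 < x) :
    log (x - 1 / 2) < realDigamma x := by
  have hdesc : ∀ y : ℝ, 1 / 2 < y → realDigamma (y + 1) - log (y + 1 - 1 / 2) <
      realDigamma y - log (y - 1 / 2) := by
    intro y hy
    rw [show y + 1 - 1 / 2 = y + 1 / 2 by ring, realDigamma_add_one (by linarith)]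
    linarith [one_div_lt_log_add_half_sub_log_sub_half hy]
  have hlim : Tendsto (fun y => realDigamma y - log (y - 1 / 2)) atTop (𝓝 0) := by
    have hlog := (tendsto_log_comp_add_sub_log (-(1 / 2))).add tendsto_log_sub_realDigamma
    simpa [sub_eq_add_neg] using hlog.neg
  have hpos := lt_of_tendsto_of_forall_add_one_lt hdesc hlim hx
  exact sub_pos.1 hpos

/-- The rescaled error `x (log x - ψ x)` of the approximation `ψ x ≈ log x`; it decreases from
`ξ` at `x = 1` to `1 / 2` at infinity. -/
noncomputable def digammaDefect (x : ℝ) : ℝ := x * (log x - realDigamma x)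

lemma digammaDefect_one : digammaDefect 1 = eulerMascheroniConstant := by
  simp [digammaDefect, realDigamma_one]

lemma half_lt_digammaDefect {x : ℝ} (hx : 0 < x) : 1 / 2 < digammaDefect x := by
  calc
    (1 / 2 : ℝ) = x * (1 / (2 * x)) := by field_simp
    _ < digammaDefect x := by
      have hψ := realDigamma_lt_log_sub_half_inv hx
      exact mul_lt_mul_of_pos_left (by linarith) hx

lemma digammaDefect_lt_half_add_inv {x : ℝ} (hx : 1 / 2 < x) :
    digammaDefect x < 1 / 2 + (x - 1 / 2)⁻¹ / 4 := by
  have hx0 : 0 < x := by linarith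
  have hpos : 0 < x - 1 / 2 := by linarith
  have hlog : log x - log (x - 1 / 2) ≤ x / (x - 1 / 2) - 1 := by
    rw [← log_div hx0.ne' hpos.ne']
    exact log_le_sub_one_of_pos (by positivity)
  calc
    digammaDefect x < x * (x / (x - 1 / 2) - 1) :=
      mul_lt_mul_of_pos_left (by linarith [log_sub_half_lt_realDigamma hx]) hx0
    _ = 1 / 2 + (x - 1 / 2)⁻¹ / 4 := by
      linear_combination (x + 1 / 2) * mul_inv_cancel₀ hpos.ne'

lemma tendsto_digammaDefect : Tendsto digammaDefect atTop (𝓝 (1 / 2)) := by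
  have hupper : Tendsto (fun x : ℝ => 1 / 2 + (x - 1 / 2)⁻¹ / 4) atTop (𝓝 (1 / 2)) := by
    have hinv : Tendsto (fun x : ℝ => (x - 1 / 2)⁻¹) atTop (𝓝 0) :=
      (tendsto_atTop_add_const_right _ (-(1 / 2)) tendsto_id).inv_tendsto_atTop
    simpa only [zero_div, add_zero] using (hinv.div_const 4).const_add (1 / 2 : ℝ)
  refine tendsto_of_tendsto_of_tendsto_of_le_of_le' tendsto_const_nhds hupper ?_ ?_
  · filter_upwards [eventually_gt_atTop 0] with x hx using (half_lt_digammaDefect hx).le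
  · filter_upwards [eventually_gt_atTop (1 / 2)] with x hx
    using (digammaDefect_lt_half_add_inv hx).le

lemma digammaDefect_sub_add_one {x : ℝ} (hx : 0 < x) :
    digammaDefect x - digammaDefect (x + 1) =
      1 + x * log x - (x + 1) * log (x + 1) + realDigamma (x + 1) := by
  rw [digammaDefect, digammaDefect, realDigamma_add_one hx]
  field_simp
  ring

lemma digammaDefect_second_difference {x : ℝ} (hx : 0 < x) :
    (digammaDefect x - digammaDefect (x + 1)) -
        (digammaDefect (x + 1) - digammaDefect (x + 1 + 1)) =
      x * log x - 2 * ((x + 1) * log (x + 1)) + (x + 2) * log (x + 2) - 1 / (x + 1) := by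
  have hx1 : 0 < x + 1 := by positivity
  rw [digammaDefect_sub_add_one hx, digammaDefect_sub_add_one hx1, realDigamma_add_one hx1,
    show x + 1 + 1 = x + 2 by ring]
  ring

lemma log_add_log_add_two_lt {x : ℝ} (hx : 0 < x) :
    log x + log (x + 2) < 2 * log (x + 1) - 1 / (x + 1) ^ 2 := by
  have hratio : x * (x + 2) / (x + 1) ^ 2 = 1 - 1 / (x + 1) ^ 2 := by
    field_simp
    ring
  have hne : x * (x + 2) / (x + 1) ^ 2 ≠ 1 := by
    rw [hratio]
    exact (sub_lt_self 1 (by positivity)).ne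
  have hlog := log_lt_sub_one_of_pos (by positivity) hne
  rw [log_div (by positivity) (by positivity), log_mul hx.ne' (by positivity), log_pow,
    hratio] at hlog
  push_cast at hlog
  linarith

lemma strictAntiOn_second_difference_mul_log_sub_inv :
    StrictAntiOn (fun x : ℝ =>
      x * log x - 2 * ((x + 1) * log (x + 1)) + (x + 2) * log (x + 2) - 1 / (x + 1)) (Ioi 0) := by
  have hderiv : ∀ x ∈ Ioi (0 : ℝ), HasDerivAt (fun x : ℝ =>
      x * log x - 2 * ((x + 1) * log (x + 1)) + (x + 2) * log (x + 2) - 1 / (x + 1))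
      (log x + log (x + 2) - 2 * log (x + 1) + 1 / (x + 1) ^ 2) x := by
    intro x hx
    rw [mem_Ioi] at hx
    have hx1 : x + 1 ≠ 0 := by positivity
    have hx2 : x + 2 ≠ 0 := by positivity
    have hinv : HasDerivAt (fun t : ℝ => 1 / (t + 1)) (-1 / (x + 1) ^ 2) x := by
      simpa only [one_div] using ((hasDerivAt_id' x).add_const 1).fun_inv hx1
    refine ((((hasDerivAt_mul_log hx.ne').sub
      (((hasDerivAt_mul_log hx1).comp_add_const x 1).const_mul 2)).add
      ((hasDerivAt_mul_log hx2).comp_add_const x 2)).sub hinv).congr_deriv ?_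
    ring
  refine strictAntiOn_of_hasDerivWithinAt_neg (convex_Ioi 0)
    (fun x hx => (hderiv x hx).continuousAt.continuousWithinAt)
    (fun x hx => (hderiv x (interior_subset hx)).hasDerivWithinAt) fun x hx => ?_
  linarith [log_add_log_add_two_lt (interior_subset hx)]

lemma strictAntiOn_digammaDefect : StrictAntiOn digammaDefect (Ioi 0) := by
  have hlim : Tendsto (fun x => digammaDefect x - digammaDefect (x + 1)) atTop (𝓝 0) := by
    simpa only [sub_self, Function.comp_def, id] using tendsto_digammaDefect.sub
      (tendsto_digammaDefect.comp (tendsto_atTop_add_const_right _ 1 tendsto_id))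
  have hsecond : StrictAntiOn (fun x => (digammaDefect x - digammaDefect (x + 1)) -
      (digammaDefect (x + 1) - digammaDefect (x + 1 + 1))) (Ioi 0) :=
    strictAntiOn_second_difference_mul_log_sub_inv.congr fun x hx =>
      (digammaDefect_second_difference hx).symm
  exact strictAntiOn_of_strictAntiOn_sub_add_one
    (strictAntiOn_of_strictAntiOn_sub_add_one hsecond hlim) tendsto_digammaDefect

lemma digammaDefect_lt_eulerMascheroniConstant {x : ℝ} (hx : 1 < x) :
    digammaDefect x < eulerMascheroniConstant :=
  digammaDefect_one ▸
    strictAntiOn_digammaDefect (mem_Ioi.2 one_pos) (mem_Ioi.2 (one_pos.trans hx)) hx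

/-- The logarithm of `x ^ (x - c) / exp (x - 1) / Γ x`, the logarithmic error of the
approximation `Γ x ≈ x ^ (x - c) / exp (x - 1)`, which is exact at `x = 1`. -/
noncomputable def logGammaError (c x : ℝ) : ℝ :=
  (x - c) * log x - (x - 1) - log (Real.Gamma x)

lemma logGammaError_one (c : ℝ) : logGammaError c 1 = 0 := by
  simp [logGammaError]

lemma hasDerivAt_logGammaError (c : ℝ) {x : ℝ} (hx : 0 < x) :
    HasDerivAt (logGammaError c) ((digammaDefect x - c) / x) x := by
  have hmul := ((hasDerivAt_id' x).sub_const c).mul (hasDerivAt_log hx.ne')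
  refine ((hmul.sub ((hasDerivAt_id' x).sub_const 1)).sub
    (hasDerivAt_log_Gamma hx)).congr_deriv ?_
  rw [digammaDefect]
  field_simp
  ring

lemma continuousOn_logGammaError (c : ℝ) : ContinuousOn (logGammaError c) (Ioi 0) := fun _ hx =>
  (hasDerivAt_logGammaError c hx).continuousAt.continuousWithinAt

lemma logGammaError_half_pos {x : ℝ} (hx : 1 < x) : 0 < logGammaError (1 / 2) x := by
  have hmono : StrictMonoOn (logGammaError (1 / 2)) (Ici 1) := by
    refine strictMonoOn_of_deriv_pos (convex_Ici 1)
      ((continuousOn_logGammaError _).mono (Ici_subset_Ioi.2 one_pos)) fun t ht => ?_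
    rw [interior_Ici, mem_Ioi] at ht
    have ht0 : 0 < t := one_pos.trans ht
    rw [(hasDerivAt_logGammaError _ ht0).deriv]
    exact div_pos (sub_pos.2 (half_lt_digammaDefect ht0)) ht0
  simpa only [logGammaError_one] using hmono self_mem_Ici hx.le hx

lemma logGammaError_eulerMascheroniConstant_neg {x : ℝ} (hx : 1 < x) :
    logGammaError eulerMascheroniConstant x < 0 := by
  have hanti : StrictAntiOn (logGammaError eulerMascheroniConstant) (Ici 1) := by
    refine strictAntiOn_of_deriv_neg (convex_Ici 1)
      ((continuousOn_logGammaError _).mono (Ici_subset_Ioi.2 one_pos)) fun t ht => ?_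
    rw [interior_Ici, mem_Ioi] at ht
    have ht0 : 0 < t := one_pos.trans ht
    rw [(hasDerivAt_logGammaError _ ht0).deriv]
    exact div_neg_of_neg_of_pos (sub_neg.2 (digammaDefect_lt_eulerMascheroniConstant ht)) ht0
  simpa only [logGammaError_one] using hanti self_mem_Ici hx.le hx

lemma rpow_div_exp_eq_Gamma_mul_exp_logGammaError (c : ℝ) {x : ℝ} (hx : 0 < x) :
    x ^ (x - c) / exp (x - 1) = Real.Gamma x * exp (logGammaError c x) := by
  have hΓ : 0 < Real.Gamma x := Gamma_pos_of_pos hx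
  rw [logGammaError, exp_sub _ (log _), exp_sub _ (x - 1), exp_log hΓ, mul_comm (x - c),
    ← rpow_def_of_pos hx, mul_div_cancel₀ _ hΓ.ne']

theorem Gamma_lt_rpow_sub_half_div_exp {x : ℝ} (hx : 1 < x) :
    Real.Gamma x < x ^ (x - 1 / 2) / exp (x - 1) := by
  have hx0 : 0 < x := one_pos.trans hx
  rw [rpow_div_exp_eq_Gamma_mul_exp_logGammaError _ hx0]
  exact lt_mul_of_one_lt_right (Gamma_pos_of_pos hx0)
    (one_lt_exp_iff.2 (logGammaError_half_pos hx))

theorem rpow_sub_eulerMascheroniConstant_div_exp_lt_Gamma {x : ℝ} (hx : 1 < x) :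
    x ^ (x - eulerMascheroniConstant) / exp (x - 1) < Real.Gamma x := by
  have hx0 : 0 < x := one_pos.trans hx
  rw [rpow_div_exp_eq_Gamma_mul_exp_logGammaError _ hx0]
  exact mul_lt_of_lt_one_right (Gamma_pos_of_pos hx0)
    (exp_lt_one_iff.2 (logGammaError_eulerMascheroniConstant_neg hx))

lemma exp_neg_mul_rpow_mul_rpow_eq_div (b c : ℝ) {x δ : ℝ} (hx : 0 < x) (hxδ : 0 < x + δ) :
    exp (-δ) * (1 + δ / x) ^ (x + δ - c) * x ^ (b + δ - c) =
      (x + δ) ^ (x + δ - c) / exp (x + δ - 1) / (x ^ (x - b) / exp (x - 1)) := by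
  have hexp : exp (-δ) = exp (x - 1) / exp (x + δ - 1) := by
    rw [← exp_sub]
    congr 1
    ring
  have hpow : x ^ (b + δ - c) = x ^ (x + δ - c) / x ^ (x - b) := by
    rw [← rpow_sub hx]
    congr 1
    ring
  rw [one_add_div hx.ne', div_rpow hxδ.le hx.le, hexp, hpow]
  have hne : x ^ (x + δ - c) ≠ 0 := (rpow_pos_of_pos hx _).ne'
  field_simp

theorem stmt9 :
    ∀ x δ : ℝ, 1 < x → 1 < x + δ →
      Real.Gamma (x + δ) / Real.Gamma x >
        Real.exp (-δ) * (1 + δ / x) ^ (x + δ - Real.eulerMascheroniConstant) *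
          x ^ (1 / 2 + δ - Real.eulerMascheroniConstant) := by
  intro x δ hx hxδ
  have hx0 : 0 < x := one_pos.trans hx
  have hxδ0 : 0 < x + δ := one_pos.trans hxδ
  rw [gt_iff_lt, exp_neg_mul_rpow_mul_rpow_eq_div _ _ hx0 hxδ0]
  exact div_lt_div₀ (rpow_sub_eulerMascheroniConstant_div_exp_lt_Gamma hxδ)
    (Gamma_lt_rpow_sub_half_div_exp hx).le (Gamma_pos_of_pos hxδ0).le (Gamma_pos_of_pos hx0)
end

section
/- Let β,γ > -1. There exists a constant C > 0, depending only on β and γ, such that for all integers 0 ≤ k ≤ n: C̃_n^k(γ,β) ≤ C·n!·k!·Γ(n+β+1)·Γ(n+γ+1)/(4^n·e^{2k}). -/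
open Real MeasureTheory Set Filter

open Asymptotics

/-!
Since `C(n,i) C(n-i,k-i) = C(n,k) C(k,i)`, we have
`C̃_n^k(β,γ) = C(n,k) ∑ i, C(k,i)² binom(n+β,n-i) binom(n+γ,i) i!`. On `(0,∞)` the Gamma function
is bounded below by its positive minimum `m`, which bounds the two generalized binomials by
`Γ(n+β+1)/m` and `Γ(n+γ+1)/m`. As `∑ i, C(k,i)² = C(2k,k)`, what is left after multiplying by
`4^n e^{2k}` is at most exponential in `n`, hence is absorbed by `n!`. The constant obtained does
not depend on `β` and `γ`.
-/

lemma exists_pos_forall_le_Gamma : ∃ m : ℝ, 0 < m ∧ ∀ x : ℝ, 0 < x → m ≤ Gamma x := by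
  obtain ⟨x₀, ⟨one_lt_x₀, -⟩, isMinOn_x₀⟩ := exists_isMinOn_Gamma_Ioi
  exact ⟨Gamma x₀, Gamma_pos_of_pos (one_pos.trans one_lt_x₀), fun x hx ↦ isMinOn_x₀ hx⟩

lemma Gamma_natCast_add_add_one_pos {β : ℝ} (hβ : -1 < β) (n : ℕ) : 0 < Gamma (n + β + 1) :=
  Gamma_pos_of_pos (by linarith [n.cast_nonneg (α := ℝ)])

section genBinom

variable {x m : ℝ} {j : ℕ}

lemma genBinom_natCast {a b : ℕ} (h : b ≤ a) : genBinom a b = a.choose b := by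
  rw [genBinom, ← Nat.cast_sub h, Gamma_nat_eq_factorial, Gamma_nat_eq_factorial,
    Nat.cast_choose ℝ h]

lemma genBinom_nonneg (h : j < x + 1) : 0 ≤ genBinom x j := by
  have : 0 < Gamma (x + 1) := Gamma_pos_of_pos (j.cast_nonneg.trans_lt h)
  have : 0 < Gamma (x - j + 1) := Gamma_pos_of_pos (by linarith)
  unfold genBinom
  positivity

lemma genBinom_le_Gamma_div (hm : 0 < m) (le_Gamma : ∀ y : ℝ, 0 < y → m ≤ Gamma y)
    (h : j < x + 1) : genBinom x j ≤ Gamma (x + 1) / m := by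
  have Gamma_nonneg : 0 ≤ Gamma (x + 1) := (Gamma_pos_of_pos (j.cast_nonneg.trans_lt h)).le
  have one_le_factorial : (1 : ℝ) ≤ j.factorial := mod_cast j.factorial_pos
  refine div_le_div_of_nonneg_left Gamma_nonneg hm ?_
  calc m = 1 * m := (one_mul m).symm
    _ ≤ j.factorial * Gamma (x - j + 1) := by
      gcongr
      exact le_Gamma _ (by linarith)

end genBinom

section Ctilde

variable {β γ m : ℝ} {n k : ℕ}

lemma Ctilde_eq_choose_mul_sum (β γ : ℝ) (hk : k ≤ n) :
    Ctilde β γ n k = n.choose k * ∑ i ∈ Finset.range (k + 1),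
      (k.choose i : ℝ) ^ 2 * (genBinom (n + β) (n - i) * genBinom (n + γ) i * i.factorial) := by
  rw [Ctilde, Finset.mul_sum]
  refine Finset.sum_congr rfl fun i hi ↦ ?_
  have hik : i ≤ k := Finset.mem_range_succ_iff.mp hi
  have choose_mul_choose :
      (n.choose k : ℝ) * k.choose i = n.choose i * (n - i).choose (k - i) :=
    mod_cast Nat.choose_mul hik
  rw [← Nat.cast_sub (hik.trans hk), genBinom_natCast (Nat.sub_le_sub_right hk i)]
  linear_combination -(k.choose i * genBinom (n + β) (n - i) * genBinom (n + γ) i * i.factorial) *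
    choose_mul_choose

lemma genBinom_mul_genBinom_le (hβ : -1 < β) (hγ : -1 < γ) (hm : 0 < m)
    (le_Gamma : ∀ y : ℝ, 0 < y → m ≤ Gamma y) {i : ℕ} (hi : i ≤ n) :
    genBinom (n + β) (n - i) * genBinom (n + γ) i ≤
      Gamma (n + β + 1) / m * (Gamma (n + γ + 1) / m) := by
  have hi' : (i : ℝ) ≤ n := mod_cast hi
  have lt_β : ((n - i : ℕ) : ℝ) < n + β + 1 := by
    have : ((n - i : ℕ) : ℝ) ≤ n := mod_cast n.sub_le i
    linarith
  have lt_γ : (i : ℝ) < n + γ + 1 := by linarith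
  exact mul_le_mul (genBinom_le_Gamma_div hm le_Gamma lt_β) (genBinom_le_Gamma_div hm le_Gamma lt_γ)
    (genBinom_nonneg lt_γ) ((genBinom_nonneg lt_β).trans (genBinom_le_Gamma_div hm le_Gamma lt_β))

lemma sum_range_choose_sq_cast (k : ℕ) :
    ∑ i ∈ Finset.range (k + 1), (k.choose i : ℝ) ^ 2 = k.centralBinom := by
  rw [Nat.centralBinom_eq_two_mul_choose, ← Nat.sum_range_choose_sq]
  push_cast
  rfl

lemma Ctilde_le (hβ : -1 < β) (hγ : -1 < γ) (hm : 0 < m)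
    (le_Gamma : ∀ y : ℝ, 0 < y → m ≤ Gamma y) (hk : k ≤ n) :
    Ctilde β γ n k ≤ n.choose k * k.centralBinom * k.factorial *
      (Gamma (n + β + 1) / m * (Gamma (n + γ + 1) / m)) := by
  set M := Gamma (n + β + 1) / m * (Gamma (n + γ + 1) / m)
  have M_nonneg : 0 ≤ M := by
    have := Gamma_natCast_add_add_one_pos hβ n
    have := Gamma_natCast_add_add_one_pos hγ n
    positivity
  calc Ctilde β γ n k
    _ = n.choose k * ∑ i ∈ Finset.range (k + 1), (k.choose i : ℝ) ^ 2 *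
          (genBinom (n + β) (n - i) * genBinom (n + γ) i * i.factorial) :=
      Ctilde_eq_choose_mul_sum β γ hk
    _ ≤ n.choose k * ∑ i ∈ Finset.range (k + 1), (k.choose i : ℝ) ^ 2 * (M * k.factorial) := by
      gcongr with i hi
      all_goals have hik : i ≤ k := Finset.mem_range_succ_iff.mp hi
      · exact genBinom_mul_genBinom_le hβ hγ hm le_Gamma (hik.trans hk)
      · exact hik
    _ = n.choose k * k.centralBinom * k.factorial * M := by
      rw [← Finset.sum_mul, sum_range_choose_sq_cast]
      ring

lemma choose_mul_centralBinom_mul_le (hk : k ≤ n) :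
    (n.choose k : ℝ) * k.centralBinom * (4 ^ n * exp (2 * k)) ≤
      exp (32 * exp 2) * n.factorial := by
  have choose_le : (n.choose k : ℝ) ≤ 2 ^ n := mod_cast n.choose_le_two_pow k
  have centralBinom_le : (k.centralBinom : ℝ) ≤ 4 ^ n := by
    calc (k.centralBinom : ℝ) ≤ 4 ^ k := mod_cast k.centralBinom_le_four_pow
      _ ≤ 4 ^ n := by gcongr; norm_num
  have exp_le : exp (2 * k) ≤ exp 2 ^ n := by
    rw [← exp_nat_mul, mul_comm]
    gcongr
  calc (n.choose k : ℝ) * k.centralBinom * (4 ^ n * exp (2 * k))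
    _ ≤ 2 ^ n * 4 ^ n * (4 ^ n * exp 2 ^ n) := by gcongr
    _ = (32 * exp 2) ^ n := by simp only [← mul_pow]; ring_nf
    _ ≤ exp (32 * exp 2) * n.factorial :=
      (div_le_iff₀ (by positivity)).mp (pow_div_factorial_le_exp _ (by positivity) n)

end Ctilde

theorem stmt10_general :
    ∃ C : ℝ, 0 < C ∧ ∀ β γ : ℝ, -1 < β → -1 < γ → ∀ n k : ℕ, k ≤ n →
      Ctilde γ β n k ≤ C * n.factorial * k.factorial * Gamma (n + β + 1) *
        Gamma (n + γ + 1) / (4 ^ n * exp (2 * k)) := by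
  obtain ⟨m, hm, le_Gamma⟩ := exists_pos_forall_le_Gamma
  refine ⟨exp (32 * exp 2) / m ^ 2, by positivity, fun β γ hβ hγ n k hk ↦ ?_⟩
  have Gamma_β_pos := Gamma_natCast_add_add_one_pos hβ n
  have Gamma_γ_pos := Gamma_natCast_add_add_one_pos hγ n
  rw [le_div_iff₀ (by positivity)]
  calc Ctilde γ β n k * (4 ^ n * exp (2 * k))
    _ ≤ n.choose k * k.centralBinom * k.factorial *
          (Gamma (n + γ + 1) / m * (Gamma (n + β + 1) / m)) * (4 ^ n * exp (2 * k)) := by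
      gcongr
      exact Ctilde_le hγ hβ hm le_Gamma hk
    _ = n.choose k * k.centralBinom * (4 ^ n * exp (2 * k)) *
          (k.factorial * (Gamma (n + γ + 1) / m * (Gamma (n + β + 1) / m))) := by ring
    _ ≤ exp (32 * exp 2) * n.factorial *
          (k.factorial * (Gamma (n + γ + 1) / m * (Gamma (n + β + 1) / m))) := by
      gcongr ?_ * _
      exact choose_mul_centralBinom_mul_le hk
    _ = exp (32 * exp 2) / m ^ 2 * n.factorial * k.factorial * Gamma (n + β + 1) *
          Gamma (n + γ + 1) := by ring

theorem stmt10 (β γ : ℝ) (hβ : -1 < β) (hγ : -1 < γ) :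
    ∃ C : ℝ, 0 < C ∧ ∀ n k : ℕ, k ≤ n →
      Ctilde γ β n k ≤ C * n.factorial * k.factorial * Real.Gamma (n + β + 1) *
        Real.Gamma (n + γ + 1) / (4 ^ n * Real.exp (2 * k)) := by
  obtain ⟨C, hC, Ctilde_le_of_le⟩ := stmt10_general
  exact ⟨C, hC, Ctilde_le_of_le β γ hβ hγ⟩
end

section
/- Let β,γ > -1. There exists a constant C > 0 such that for all integers 0 ≤ k ≤ n: (n!·k!·Γ(n+β+1)·Γ(n+γ+1)/Γ(n-k+1))·Σ_{i=0}^k 1/(i!·(k-i)!·Γ(n+β-i+1)·Γ(γ+i+1)) ≤ C·n!·k!·Γ(n+β+1)·Γ(n+γ+1)·4^{-n}·e^{-2k}. -/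
open Real MeasureTheory Set Filter

open Asymptotics


/-!
On `(0, ∞)` the Gamma function attains a positive minimum `m`. Bounding both Gamma factors of each
summand below by `m` leaves `m⁻² ∑ 1 / (i! (k - i)!) = m⁻² 2 ^ k / k!`. Together with
`Γ (n - k + 1) = (n - k)!` this gives a term of the binomial expansion of `(2 + 1) ^ n / n!`, and
`3 ^ n / n!` decays faster than every geometric sequence, in particular than `4 ^ (-n) e ^ (-2 n)`.
The constant does not depend on `β` and `γ`.
-/

theorem exists_pos_le_Gamma : ∃ m : ℝ, 0 < m ∧ ∀ x : ℝ, 0 < x → m ≤ Real.Gamma x := by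
  obtain ⟨x₀, hx₀, hmin⟩ := Real.exists_isMinOn_Gamma_Ioi
  exact ⟨Real.Gamma x₀, Real.Gamma_pos_of_pos (zero_lt_one.trans hx₀.1), fun _ hx => hmin hx⟩

theorem sum_one_div_factorial_mul_factorial {𝕜 : Type*} [Field 𝕜] [CharZero 𝕜] (k : ℕ) :
    ∑ i ∈ Finset.range (k + 1), 1 / ((i.factorial : 𝕜) * (k - i).factorial) =
      2 ^ k / k.factorial := by
  have choose_div_factorial : ∀ i ∈ Finset.range (k + 1),
      1 / ((i.factorial : 𝕜) * (k - i).factorial) = k.choose i / k.factorial := by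
    intro i hi
    have factorial_ne_zero : (k.factorial : 𝕜) ≠ 0 := Nat.cast_ne_zero.mpr k.factorial_ne_zero
    rw [Nat.cast_choose 𝕜 (Finset.mem_range_succ_iff.mp hi), div_div_cancel_left' factorial_ne_zero,
      one_div]
  rw [Finset.sum_congr rfl choose_div_factorial, ← Finset.sum_div]
  exact_mod_cast congrArg (fun s : ℕ => (s : 𝕜) / k.factorial) (Nat.sum_range_choose k)

section LinearOrderedField

variable {𝕜 : Type*} [Field 𝕜] [LinearOrder 𝕜] [IsStrictOrderedRing 𝕜]

theorem sum_one_div_factorial_mul_factorial_mul_le {m : 𝕜} (hm : 0 < m) {k : ℕ} {f : ℕ → 𝕜}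
    (hf : ∀ i ≤ k, m ≤ f i) :
    ∑ i ∈ Finset.range (k + 1), 1 / ((i.factorial : 𝕜) * (k - i).factorial * f i) ≤
      2 ^ k / k.factorial / m := by
  rw [← sum_one_div_factorial_mul_factorial, Finset.sum_div]
  refine Finset.sum_le_sum fun i hi => ?_
  rw [div_div]
  gcongr
  exact hf i (Finset.mem_range_succ_iff.mp hi)

theorem pow_div_factorial_mul_factorial_le {x : 𝕜} (hx : 0 ≤ x) {n k : ℕ} (hkn : k ≤ n) :
    x ^ k / (k.factorial * (n - k).factorial) ≤ (x + 1) ^ n / n.factorial := by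
  have binomial_term_le : x ^ k * n.choose k ≤ (x + 1) ^ n := by
    rw [add_pow]
    simpa only [one_pow, mul_one] using Finset.single_le_sum
      (f := fun i => x ^ i * 1 ^ (n - i) * (n.choose i : 𝕜)) (fun i _ => by positivity)
      (Finset.mem_range_succ_iff.mpr hkn)
  calc x ^ k / (k.factorial * (n - k).factorial)
      = x ^ k * n.choose k / n.factorial := by
        rw [Nat.cast_choose 𝕜 hkn]
        field_simp
    _ ≤ (x + 1) ^ n / n.factorial := by gcongr

end LinearOrderedField

theorem pow_div_factorial_le_exp_div_pow_mul_pow {x a b : ℝ} (hx : 0 ≤ x) (ha : 0 < a)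
    (hb : 1 ≤ b) {n k : ℕ} (hkn : k ≤ n) :
    x ^ n / n.factorial ≤ Real.exp (x * a * b) / (a ^ n * b ^ k) := by
  have : 0 < b := zero_lt_one.trans_le hb
  calc x ^ n / n.factorial
      = (x * a * b) ^ n / n.factorial / (a ^ n * b ^ n) := by
        rw [mul_pow, mul_pow]
        field_simp
    _ ≤ Real.exp (x * a * b) / (a ^ n * b ^ k) := by
        gcongr
        exact Real.pow_div_factorial_le_exp _ (by positivity) n

section GammaLowerBound

variable {m β γ : ℝ} {n k : ℕ}

theorem sum_one_div_factorial_mul_Gamma_le (hm : 0 < m)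
    (hΓ : ∀ x : ℝ, 0 < x → m ≤ Real.Gamma x) (hβ : -1 < β) (hγ : -1 < γ) (hkn : k ≤ n) :
    ∑ i ∈ Finset.range (k + 1),
        1 / ((i.factorial : ℝ) * (k - i).factorial * Real.Gamma ((n : ℝ) + β - i + 1) *
          Real.Gamma (γ + i + 1)) ≤
      2 ^ k / k.factorial / (m * m) := by
  simp only [mul_assoc _ (Real.Gamma _) (Real.Gamma _)]
  refine sum_one_div_factorial_mul_factorial_mul_le (mul_pos hm hm) fun i hik => ?_
  have hin : (i : ℝ) ≤ n := by exact_mod_cast hik.trans hkn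
  exact mul_le_mul (hΓ _ (by linarith)) (hΓ _ (by linarith [i.cast_nonneg (α := ℝ)])) hm.le
    (hm.le.trans (hΓ _ (by linarith)))

theorem sum_one_div_factorial_mul_Gamma_div_Gamma_le (hm : 0 < m)
    (hΓ : ∀ x : ℝ, 0 < x → m ≤ Real.Gamma x) (hβ : -1 < β) (hγ : -1 < γ) (hkn : k ≤ n) :
    (∑ i ∈ Finset.range (k + 1),
        1 / ((i.factorial : ℝ) * (k - i).factorial * Real.Gamma ((n : ℝ) + β - i + 1) *
          Real.Gamma (γ + i + 1))) / Real.Gamma ((n : ℝ) - k + 1) ≤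
      3 ^ n / n.factorial / (m * m) := by
  rw [← Nat.cast_sub hkn, Real.Gamma_nat_eq_factorial]
  calc _ ≤ (2 : ℝ) ^ k / k.factorial / (m * m) / (n - k).factorial := by
        gcongr
        exact sum_one_div_factorial_mul_Gamma_le hm hΓ hβ hγ hkn
    _ = 2 ^ k / (k.factorial * (n - k).factorial) / (m * m) := by
        rw [div_right_comm, div_div (2 ^ k : ℝ)]
    _ ≤ (2 + 1) ^ n / n.factorial / (m * m) := by
        gcongr ?_ / (m * m)
        exact pow_div_factorial_mul_factorial_le zero_le_two hkn
    _ = 3 ^ n / n.factorial / (m * m) := by norm_num only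

end GammaLowerBound

theorem three_pow_div_factorial_le {n k : ℕ} (hkn : k ≤ n) :
    (3 : ℝ) ^ n / n.factorial ≤
      Real.exp (12 * Real.exp 2) * ((4 : ℝ) ^ (-(n : ℝ)) * Real.exp (-2 * k)) := by
  have rpow_mul_exp : (4 : ℝ) ^ (-(n : ℝ)) * Real.exp (-2 * k) = (4 ^ n * Real.exp 2 ^ k)⁻¹ := by
    rw [Real.rpow_neg zero_le_four, Real.rpow_natCast, neg_mul, Real.exp_neg, mul_comm (2 : ℝ),
      Real.exp_nat_mul, mul_inv]
  rw [rpow_mul_exp, ← div_eq_mul_inv, show (12 : ℝ) = 3 * 4 by norm_num]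
  exact pow_div_factorial_le_exp_div_pow_mul_pow zero_le_three zero_lt_four
    (Real.one_le_exp zero_le_two) hkn

theorem stmt11_general :
    ∃ C : ℝ, 0 < C ∧ ∀ β γ : ℝ, -1 < β → -1 < γ → ∀ n k : ℕ, k ≤ n →
      ((n.factorial : ℝ) * k.factorial * Real.Gamma (n + β + 1) * Real.Gamma (n + γ + 1) /
          Real.Gamma ((n : ℝ) - k + 1)) *
        (∑ i ∈ Finset.range (k + 1),
          1 / (i.factorial * (k - i).factorial * Real.Gamma ((n : ℝ) + β - i + 1) *
            Real.Gamma (γ + i + 1))) ≤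
      C * n.factorial * k.factorial * Real.Gamma (n + β + 1) * Real.Gamma (n + γ + 1) *
        (4 : ℝ) ^ (-(n : ℝ)) * Real.exp (-2 * k) := by
  obtain ⟨m, hm, hΓ⟩ := exists_pos_le_Gamma
  refine ⟨Real.exp (12 * Real.exp 2) / (m * m), by positivity, fun β γ hβ hγ n k hkn => ?_⟩
  have hΓβ : 0 < Real.Gamma (n + β + 1) :=
    Real.Gamma_pos_of_pos (by linarith [n.cast_nonneg (α := ℝ)])
  have hΓγ : 0 < Real.Gamma (n + γ + 1) :=
    Real.Gamma_pos_of_pos (by linarith [n.cast_nonneg (α := ℝ)])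
  have sum_div_Gamma_le := (sum_one_div_factorial_mul_Gamma_div_Gamma_le hm hΓ hβ hγ hkn).trans
    (div_le_div_of_nonneg_right (three_pow_div_factorial_le hkn) (mul_pos hm hm).le)
  rw [div_mul_eq_mul_div, mul_div_assoc]
  calc _ ≤ _ := mul_le_mul_of_nonneg_left sum_div_Gamma_le (by positivity)
    _ = _ := by ring

theorem stmt11 (β γ : ℝ) (hβ : -1 < β) (hγ : -1 < γ) :
    ∃ C : ℝ, 0 < C ∧ ∀ n k : ℕ, k ≤ n →
      ((n.factorial : ℝ) * k.factorial * Real.Gamma (n + β + 1) * Real.Gamma (n + γ + 1) /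
          Real.Gamma ((n : ℝ) - k + 1)) *
        (∑ i ∈ Finset.range (k + 1),
          1 / (i.factorial * (k - i).factorial * Real.Gamma ((n : ℝ) + β - i + 1) *
            Real.Gamma (γ + i + 1))) ≤
      C * n.factorial * k.factorial * Real.Gamma (n + β + 1) * Real.Gamma (n + γ + 1) *
        (4 : ℝ) ^ (-(n : ℝ)) * Real.exp (-2 * k) := by
  obtain ⟨C, hC, hbound⟩ := stmt11_general
  exact ⟨C, hC, hbound β γ hβ hγ⟩
end

section
/- Let γ > -1. There exists a constant C > 0 such that for every integer k ≥ 0: Σ_{i=0}^k 2^{i+k}/(i!·(k-i)!·Γ(γ+i+1)) ≤ C·e^{-2k}. -/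
open Real MeasureTheory Set Filter

open Asymptotics

/-!
Since `Γ` tends to infinity along the reals, the numbers `1 / Γ (γ + i + 1)` are bounded in `i`.
Without this factor, and with `2` replaced by `x`, the sum equals `(x ^ 2 + x) ^ k / k!` by the
binomial theorem. This decays faster than `exp (-r * k)` for every `r`: replace `z` by `z * exp r`
in `z ^ k / k! ≤ exp z`.
-/

lemma sub_one_le_Gamma {x : ℝ} (hx : 3 ≤ x) : x - 1 ≤ Gamma x := by
  have one_le_Gamma : 1 ≤ Gamma (x - 1) := by
    have two_le : 2 ≤ x - 1 := by linarith
    simpa only [Gamma_two] using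
      Gamma_strictMonoOn_Ici.monotoneOn self_mem_Ici (mem_Ici.2 two_le) two_le
  calc x - 1 ≤ (x - 1) * Gamma (x - 1) := le_mul_of_one_le_right (by linarith) one_le_Gamma
    _ = Gamma (x - 1 + 1) := (Gamma_add_one (by linarith)).symm
    _ = Gamma x := by rw [sub_add_cancel]

lemma tendsto_Gamma_atTop : Tendsto Gamma atTop atTop :=
  tendsto_atTop_mono' atTop ((eventually_ge_atTop 3).mono fun _ ↦ sub_one_le_Gamma)
    (tendsto_atTop_add_const_right _ (-1) tendsto_id)

-- At a pole `Gamma` is `0`, so its inverse is `0` there, which is the value of the entire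
-- function `1 / Γ`.
lemma exists_forall_abs_inv_Gamma_add_natCast_le (x : ℝ) :
    ∃ B : ℝ, 0 < B ∧ ∀ n : ℕ, |(Gamma (x + n))⁻¹| ≤ B := by
  have tendsto_add : Tendsto (fun n : ℕ ↦ x + n) atTop atTop :=
    tendsto_atTop_add_const_left _ x tendsto_natCast_atTop_atTop
  have isBounded := Metric.isBounded_range_of_tendsto _
    (tendsto_Gamma_atTop.comp tendsto_add).inv_tendsto_atTop
  obtain ⟨B, hB, le_B⟩ := isBounded.exists_pos_norm_le
  exact ⟨B, hB, fun n ↦ le_B _ (mem_range_self n)⟩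

lemma sum_pow_mul_pow_div_factorial {K : Type*} [Field K] [CharZero K] (x y : K) (k : ℕ) :
    ∑ i ∈ Finset.range (k + 1), x ^ i * y ^ (k - i) / (i.factorial * (k - i).factorial) =
      (x + y) ^ k / k.factorial := by
  rw [add_pow, Finset.sum_div]
  refine Finset.sum_congr rfl fun i hi ↦ ?_
  have factorial_ne_zero (n : ℕ) : (n.factorial : K) ≠ 0 := mod_cast n.factorial_ne_zero
  rw [Nat.cast_choose K (Finset.mem_range_succ_iff.1 hi)]
  field_simp [factorial_ne_zero]

lemma abs_sum_pow_mul_pow_div_factorial_mul_le {a : ℕ → ℝ} {B : ℝ} (ha : ∀ i, |a i| ≤ B)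
    (x y : ℝ) (k : ℕ) :
    |∑ i ∈ Finset.range (k + 1),
        x ^ i * y ^ (k - i) / (i.factorial * (k - i).factorial) * a i| ≤
      (|x| + |y|) ^ k / k.factorial * B := by
  rw [← sum_pow_mul_pow_div_factorial, Finset.sum_mul]
  refine (Finset.abs_sum_le_sum_abs _ _).trans (Finset.sum_le_sum fun i _ ↦ ?_)
  simp only [abs_mul, abs_div, abs_pow, Nat.abs_cast]
  gcongr
  exact ha i

lemma pow_div_factorial_le_exp_mul_exp {x : ℝ} (hx : 0 ≤ x) (r : ℝ) (k : ℕ) :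
    x ^ k / k.factorial ≤ exp (x * exp r) * exp (-r * k) := by
  have exp_pow_mul : exp r ^ k * exp (-r * k) = 1 := by
    rw [← exp_nat_mul, ← exp_add, mul_comm, neg_mul, add_neg_cancel, exp_zero]
  calc x ^ k / k.factorial = x ^ k / k.factorial * (exp r ^ k * exp (-r * k)) := by
        rw [exp_pow_mul, mul_one]
    _ = (x * exp r) ^ k / k.factorial * exp (-r * k) := by ring
    _ ≤ exp (x * exp r) * exp (-r * k) := by
        gcongr
        exact pow_div_factorial_le_exp _ (by positivity) k

theorem stmt12_general (γ r x : ℝ) :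
    ∃ C : ℝ, 0 < C ∧ ∀ k : ℕ,
      |∑ i ∈ Finset.range (k + 1),
          x ^ (i + k) / (i.factorial * (k - i).factorial * Gamma (γ + i + 1))| ≤
        C * exp (-r * k) := by
  obtain ⟨B, hB, inv_Gamma_le⟩ := exists_forall_abs_inv_Gamma_add_natCast_le (γ + 1)
  refine ⟨exp ((|x ^ 2| + |x|) * exp r) * B, by positivity, fun k ↦ ?_⟩
  have sum_eq : ∑ i ∈ Finset.range (k + 1),
        x ^ (i + k) / (i.factorial * (k - i).factorial * Gamma (γ + i + 1)) =
      ∑ i ∈ Finset.range (k + 1), (x ^ 2) ^ i * x ^ (k - i) /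
        (i.factorial * (k - i).factorial) * (Gamma (γ + 1 + i))⁻¹ := by
    refine Finset.sum_congr rfl fun i hi ↦ ?_
    have pow_split : x ^ (i + k) = (x ^ 2) ^ i * x ^ (k - i) := by
      rw [← pow_mul, ← pow_add]
      congr 1
      have := Finset.mem_range_succ_iff.1 hi
      lia
    rw [pow_split, ← div_div, div_eq_mul_inv _ (Gamma _), add_right_comm]
  calc _ ≤ (|x ^ 2| + |x|) ^ k / k.factorial * B :=
        sum_eq ▸ abs_sum_pow_mul_pow_div_factorial_mul_le inv_Gamma_le (x ^ 2) x k
    _ ≤ exp ((|x ^ 2| + |x|) * exp r) * exp (-r * k) * B := by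
        gcongr
        exact pow_div_factorial_le_exp_mul_exp (by positivity) r k
    _ = _ := mul_right_comm _ _ _

theorem stmt12 (γ : ℝ) (hγ : -1 < γ) :
    ∃ C : ℝ, 0 < C ∧ ∀ k : ℕ,
      (∑ i ∈ Finset.range (k + 1),
          (2 : ℝ) ^ (i + k) / (i.factorial * (k - i).factorial * Real.Gamma (γ + i + 1))) ≤
        C * Real.exp (-2 * k) :=
  let ⟨C, hC, sum_le⟩ := stmt12_general γ 2 2
  ⟨C, hC, fun k ↦ (le_abs_self _).trans (sum_le k)⟩
end

section
/- Let α ∈ (-1,0) and β ∈ [-1/2,1/2]. Define Ξ_{m-1} := Σ_{k=1}^{m-1} k!·Γ(α+β+k+1)/m^{2k-1} for integers m ≥ 2. Then m!·Γ(α+β+m+1)/(m+1)^{2m-1} → 0 as m → ∞, the sequence (Ξ_m) is eventually strictly decreasing (Ξ_m - Ξ_{m-1} < 0 for all sufficiently large m), and consequently there exists C > 0 with Ξ_{m-1} ≤ C for all m ≥ 2. -/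
open Real MeasureTheory Set Filter

open Asymptotics


/-- `Ξ_m = Σ_{k=1}^{m} k!·Γ(α+β+k+1)/(m+1)^{2k-1}`, so that `Ξ_{m-1}` has denominators `m^{2k-1}`. -/
noncomputable def XiSeq (α β : ℝ) (m : ℕ) : ℝ :=
  ∑ k ∈ Finset.Icc 1 m,
    (k.factorial : ℝ) * Real.Gamma (α + β + k + 1) / ((m : ℝ) + 1) ^ (2 * (k : ℝ) - 1)

/-!
Write `s = α + β`. The last summand `T m` of `Ξ_m` satisfies
`T (m + 1) / T m = (s + m + 1) / (m + 2) * ((m + 1) / (m + 2)) ^ (2 * m)`. By Bernoulli's inequality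
the power is at most `1 / 2`, so the ratio test gives `m * (m + 1) * T m → 0`. Passing from `Ξ_m` to
`Ξ_{m+1}` adds `T (m + 1)` but shrinks every old summand, all numerators being positive for
`s > -2`; the summand `k = 1` alone loses `Γ(s + 2) / ((m + 1) * (m + 2))`, which eventually exceeds
`T (m + 1)`.
-/

lemma rpow_two_mul_natCast_sub_one {x : ℝ} (hx : x ≠ 0) (k : ℕ) :
    x ^ (2 * (k : ℝ) - 1) = x ^ (2 * k) / x := by
  rw [Real.rpow_sub_one hx]
  norm_cast

lemma div_add_one_pow_le_half {x : ℝ} (hx : 0 < x) {n : ℕ} (hxn : x ≤ n) :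
    (x / (x + 1)) ^ n ≤ 1 / 2 := by
  have bernoulli : 1 + n * (1 / x) ≤ (1 + 1 / x) ^ n :=
    one_add_mul_le_pow (by linarith [one_div_pos.2 hx]) n
  have one_le : 1 ≤ n * (1 / x) := by rwa [mul_one_div, one_le_div hx]
  calc (x / (x + 1)) ^ n = 1 / (1 + 1 / x) ^ n := by
        rw [← one_div_pow]
        congr 1
        field_simp
    _ ≤ 1 / 2 := one_div_le_one_div_of_le two_pos (by linarith)

lemma bddAbove_range_of_eventually_succ_le {γ : Type*} [Preorder γ] [IsDirectedOrder γ] {u : ℕ → γ}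
    (h : ∀ᶠ m in atTop, u (m + 1) ≤ u m) : BddAbove (range u) := by
  obtain ⟨M, hM⟩ := eventually_atTop.1 h
  have le_uM : ∀ᶠ m in atTop, u m ≤ u M := by
    filter_upwards [eventually_ge_atTop M] with m hm
    exact antitoneOn_nat_Ici_of_succ_le hM (mem_ofPred.2 le_rfl) hm hm
  exact (isBoundedUnder_of_eventually_le le_uM).bddAbove_range

lemma sum_div_rpow_succ_lt {a e : ℕ → ℝ} (ha : ∀ k, 1 < k → 0 ≤ a k) (he_one : e 1 = 1)
    (he : ∀ k, 1 < k → 0 ≤ e k) {m : ℕ} (hm : 1 ≤ m)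
    (hlast : ((m + 1 : ℕ) : ℝ) * ((m + 1 : ℕ) + 1) *
      (a (m + 1) / (((m + 1 : ℕ) : ℝ) + 1) ^ e (m + 1)) < a 1) :
    ∑ k ∈ Finset.Icc 1 (m + 1), a k / (((m + 1 : ℕ) : ℝ) + 1) ^ e k <
      ∑ k ∈ Finset.Icc 1 m, a k / ((m : ℝ) + 1) ^ e k := by
  have middle_le : ∑ k ∈ Finset.Ioc 1 m, a k / (((m + 1 : ℕ) : ℝ) + 1) ^ e k ≤
      ∑ k ∈ Finset.Ioc 1 m, a k / ((m : ℝ) + 1) ^ e k := by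
    refine Finset.sum_le_sum fun k hk => ?_
    have one_lt_k : 1 < k := (Finset.mem_Ioc.1 hk).1
    have numerator_nonneg := ha k one_lt_k
    have exponent_nonneg := he k one_lt_k
    gcongr
    simp
  have first_gap : a 1 / ((m : ℝ) + 1) - a 1 / (((m + 1 : ℕ) : ℝ) + 1) =
      a 1 / (((m + 1 : ℕ) : ℝ) * ((m + 1 : ℕ) + 1)) := by
    push_cast
    field_simp
    ring
  have last_lt_gap : a (m + 1) / (((m + 1 : ℕ) : ℝ) + 1) ^ e (m + 1) <
      a 1 / (((m + 1 : ℕ) : ℝ) * ((m + 1 : ℕ) + 1)) := by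
    rwa [lt_div_iff₀' (by positivity)]
  rw [Finset.sum_Icc_succ_top (by lia), ← Finset.add_sum_Ioc_eq_sum_Icc hm,
    ← Finset.add_sum_Ioc_eq_sum_Icc hm, he_one, Real.rpow_one, Real.rpow_one]
  linarith

/-- The numerator `k!·Γ(s+k+1)` of the `k`-th summand of `Ξ_m`, where `s = α + β`. -/
noncomputable def xiNumerator (s : ℝ) (k : ℕ) : ℝ :=
  (k.factorial : ℝ) * Real.Gamma (s + k + 1)

/-- The last summand `m!·Γ(s+m+1)/(m+1)^{2m-1}` of `Ξ_m`, where `s = α + β`. -/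
noncomputable def xiLastTerm (s : ℝ) (m : ℕ) : ℝ :=
  xiNumerator s m / ((m : ℝ) + 1) ^ (2 * (m : ℝ) - 1)

lemma xiNumerator_pos {s : ℝ} (hs : -2 < s) {k : ℕ} (hk : 1 ≤ k) : 0 < xiNumerator s k := by
  have one_le_k : (1 : ℝ) ≤ k := mod_cast hk
  exact mul_pos (mod_cast k.factorial_pos) (Real.Gamma_pos_of_pos (by linarith))

lemma xiNumerator_succ {s : ℝ} {m : ℕ} (h : s + m + 1 ≠ 0) :
    xiNumerator s (m + 1) = (m + 1) * (s + m + 1) * xiNumerator s m := by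
  have shift : s + ((m + 1 : ℕ) : ℝ) + 1 = s + m + 1 + 1 := by push_cast; ring
  rw [xiNumerator, xiNumerator, shift, Real.Gamma_add_one h, Nat.factorial_succ]
  push_cast
  ring

lemma xiLastTerm_succ {s : ℝ} {m : ℕ} (h : s + m + 1 ≠ 0) :
    xiLastTerm s (m + 1) =
      (s + m + 1) / (m + 2) * (((m : ℝ) + 1) / (m + 2)) ^ (2 * m) * xiLastTerm s m := by
  have add_two : ((m + 1 : ℕ) : ℝ) + 1 = m + 2 := by push_cast; ring
  rw [xiLastTerm, xiLastTerm, xiNumerator_succ h, add_two,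
    rpow_two_mul_natCast_sub_one (by positivity), rpow_two_mul_natCast_sub_one (by positivity),
    div_pow, Nat.mul_succ, pow_add]
  field_simp

lemma eventually_norm_mul_xiLastTerm_succ_le (s : ℝ) :
    ∀ᶠ m : ℕ in atTop,
      ‖((m + 1 : ℕ) : ℝ) * ((m + 1 : ℕ) + 1) * xiLastTerm s (m + 1)‖ ≤
        3 / 4 * ‖(m : ℝ) * (m + 1) * xiLastTerm s m‖ := by
  filter_upwards [eventually_ge_atTop 1,
    tendsto_natCast_atTop_atTop.eventually_ge_atTop (-s),
    tendsto_natCast_atTop_atTop.eventually_ge_atTop (2 * (s + 1))] with m hm hneg hlarge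
  have one_le_m : (1 : ℝ) ≤ m := mod_cast hm
  have shift_pos : 0 < s + m + 1 := by linarith
  have pow_le : (((m : ℝ) + 1) / (m + 2)) ^ (2 * m) ≤ 1 / 2 := by
    convert div_add_one_pow_le_half (x := m + 1) (n := 2 * m) (by positivity)
      (by push_cast; linarith) using 3
    ring
  have ratio_le : (s + m + 1) / m ≤ 3 / 2 := by
    rw [div_le_iff₀ (by positivity)]
    linarith
  have recurrence : ((m + 1 : ℕ) : ℝ) * ((m + 1 : ℕ) + 1) * xiLastTerm s (m + 1) =
      (s + m + 1) / m * (((m : ℝ) + 1) / (m + 2)) ^ (2 * m) *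
        (m * (m + 1) * xiLastTerm s m) := by
    rw [xiLastTerm_succ shift_pos.ne']
    push_cast
    field_simp
    ring
  rw [recurrence, norm_mul, Real.norm_of_nonneg (by positivity)]
  gcongr
  calc (s + m + 1) / m * (((m : ℝ) + 1) / (m + 2)) ^ (2 * m) ≤ 3 / 2 * (1 / 2) := by gcongr
    _ = 3 / 4 := by norm_num

lemma tendsto_mul_add_one_mul_xiLastTerm (s : ℝ) :
    Tendsto (fun m : ℕ => (m : ℝ) * (m + 1) * xiLastTerm s m) atTop (nhds 0) :=
  (summable_of_ratio_norm_eventually_le (by norm_num)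
    (eventually_norm_mul_xiLastTerm_succ_le s)).tendsto_atTop_zero

lemma tendsto_xiLastTerm (s : ℝ) : Tendsto (xiLastTerm s) atTop (nhds 0) := by
  refine squeeze_zero_norm' ?_
    (tendsto_zero_iff_norm_tendsto_zero.1 (tendsto_mul_add_one_mul_xiLastTerm s))
  filter_upwards [eventually_ge_atTop 1] with m hm
  have one_le_m : (1 : ℝ) ≤ m := mod_cast hm
  rw [norm_mul _ (xiLastTerm s m), Real.norm_of_nonneg (by positivity : 0 ≤ (m : ℝ) * (m + 1))]
  exact le_mul_of_one_le_left (norm_nonneg _) (by nlinarith)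

lemma eventually_XiSeq_succ_lt {α β : ℝ} (hs : -2 < α + β) :
    ∀ᶠ m : ℕ in atTop, XiSeq α β (m + 1) < XiSeq α β m := by
  have weighted_lt := (tendsto_mul_add_one_mul_xiLastTerm (α + β)).eventually_lt_const
    (xiNumerator_pos hs le_rfl)
  filter_upwards [eventually_ge_atTop 1, (tendsto_add_atTop_nat 1).eventually weighted_lt]
    with m hm hlast
  have exponent_nonneg : ∀ k : ℕ, 1 < k → 0 ≤ 2 * (k : ℝ) - 1 := fun k hk => by
    have one_lt_k : (1 : ℝ) < k := mod_cast hk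
    linarith
  exact sum_div_rpow_succ_lt (e := fun k => 2 * (k : ℝ) - 1)
    (fun k hk => (xiNumerator_pos hs hk.le).le) (by norm_num) exponent_nonneg hm hlast

theorem stmt13_general (α β : ℝ) (hs : -2 < α + β) :
    Tendsto (fun m : ℕ =>
        (m.factorial : ℝ) * Real.Gamma (α + β + m + 1) / ((m : ℝ) + 1) ^ (2 * (m : ℝ) - 1))
      atTop (nhds 0) ∧
    (∃ M : ℕ, ∀ m : ℕ, M ≤ m → XiSeq α β (m + 1) < XiSeq α β m) ∧
    ∃ C : ℝ, 0 < C ∧ ∀ m : ℕ, 1 ≤ m → XiSeq α β m ≤ C := by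
  have decreasing := eventually_XiSeq_succ_lt hs
  obtain ⟨B, hB⟩ := bddAbove_range_of_eventually_succ_le (decreasing.mono fun _ h => h.le)
  refine ⟨tendsto_xiLastTerm (α + β), eventually_atTop.1 decreasing,
    max B 1, by positivity, fun m _ => ?_⟩
  exact (hB (mem_range_self m)).trans (le_max_left B 1)

theorem stmt13 (α β : ℝ) (hα : α ∈ Set.Ioo (-1 : ℝ) 0)
    (hβ : β ∈ Set.Icc (-(1 : ℝ) / 2) (1 / 2)) :
    Tendsto (fun m : ℕ =>
        (m.factorial : ℝ) * Real.Gamma (α + β + m + 1) / ((m : ℝ) + 1) ^ (2 * (m : ℝ) - 1))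
      atTop (nhds 0) ∧
    (∃ M : ℕ, ∀ m : ℕ, M ≤ m → XiSeq α β (m + 1) < XiSeq α β m) ∧
    ∃ C : ℝ, 0 < C ∧ ∀ m : ℕ, 1 ≤ m → XiSeq α β m ≤ C := by
  exact stmt13_general α β (by linarith [hα.1, hβ.1])
end

section
/- Let α ∈ (-1,0) and β,γ ∈ [-1/2,1/2]. Define d_k := 4^k·Σ_{i=0}^k 2^i/(i!·(k-i)!·Γ(γ+i+1)). Then for every integer m ≥ 1 the series Σ_{k=m}^∞ d_k·k!·Γ(α+γ+k+1)/(2^k·Γ(α+γ+k+β+m+2)·Γ(k+α-m+1)) converges, and there exists a constant C > 0 such that this sum is at most C for every m ≥ 1. -/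
open Real MeasureTheory Set Filter

open Asymptotics


/-- `d_k = 4^k·Σ_{i=0}^k 2^i/(i!·(k-i)!·Γ(γ+i+1))`. -/
noncomputable def dCoef (γ : ℝ) (k : ℕ) : ℝ :=
  (4 : ℝ) ^ k * ∑ i ∈ Finset.range (k + 1),
    (2 : ℝ) ^ i / (i.factorial * (k - i).factorial * Real.Gamma (γ + i + 1))

/-! Log-convexity of `Γ` makes `x ↦ Γ x / Γ (x + s)` decreasing for `s ≥ 0`. Hence, for
`k ≥ m ≥ 1`, the quotient `Γ (α + γ + k + 1) / Γ (α + γ + k + β + m + 2)` is at most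
`Γ (α + γ + 2) / Γ (α + β + γ + 3 + m) = O(2 ^ m / m!)`. Writing `k = m + j`, also
`1 / Γ (k + α - m + 1) = 1 / Γ (α + 1 + j) = O(2 ^ j / j!)` and `d_k * k! = O(20 ^ k)`. So the
summand is `O((20 ^ m / m!) * (20 ^ j / j!))` and the series is `O(exp 20 * exp 20)`. -/

theorem factorial_mul_Gamma_le_Gamma_add_nat {a : ℝ} (ha : 1 ≤ a) (n : ℕ) :
    (n.factorial : ℝ) * Real.Gamma a ≤ Real.Gamma (a + n) := by
  induction n with
  | zero => simp
  | succ n ih =>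
    calc ((n + 1).factorial : ℝ) * Real.Gamma a
        = (1 + n) * (n.factorial * Real.Gamma a) := by
          rw [Nat.factorial_succ]
          push_cast
          ring
      _ ≤ (a + n) * Real.Gamma (a + n) := by gcongr
      _ = Real.Gamma (a + (n + 1 : ℕ)) := by
          rw [← Real.Gamma_add_one (by positivity)]
          push_cast
          ring_nf

/-- A constant with `1 / Γ (a + n) ≤ invGammaConst a * (2 ^ n / n!)` for all `n`, when `0 < a`. -/
noncomputable def invGammaConst (a : ℝ) : ℝ :=
  (a + 1) / Real.Gamma (a + 1)

theorem invGammaConst_pos {a : ℝ} (ha : 0 < a) : 0 < invGammaConst a :=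
  div_pos (by positivity) (Real.Gamma_pos_of_pos (by positivity))

theorem add_nat_le_add_one_mul_two_pow {a : ℝ} (ha : 0 ≤ a) (n : ℕ) :
    a + n ≤ (a + 1) * 2 ^ n := by
  have two_pow_ge : (n : ℝ) + 1 ≤ 2 ^ n := by exact_mod_cast Nat.lt_two_pow_self (n := n)
  calc a + n ≤ (a + 1) * (n + 1) := by nlinarith [mul_nonneg ha n.cast_nonneg]
    _ ≤ (a + 1) * 2 ^ n := by gcongr

theorem inv_Gamma_add_nat_le {a : ℝ} (ha : 0 < a) (n : ℕ) :
    (Real.Gamma (a + n))⁻¹ ≤ invGammaConst a * (2 ^ n / n.factorial) := by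
  have Gamma_succ : Real.Gamma (a + 1 + n) = (a + n) * Real.Gamma (a + n) := by
    rw [← Real.Gamma_add_one (by positivity), add_right_comm]
  calc (Real.Gamma (a + n))⁻¹ = (a + n) / Real.Gamma (a + 1 + n) := by
        rw [Gamma_succ, div_mul_cancel_left₀ (by positivity)]
    _ ≤ (a + 1) * 2 ^ n / (n.factorial * Real.Gamma (a + 1)) := by
        gcongr
        · exact add_nat_le_add_one_mul_two_pow ha.le n
        · exact factorial_mul_Gamma_le_Gamma_add_nat (by linarith) n
    _ = invGammaConst a * (2 ^ n / n.factorial) := by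
        rw [invGammaConst, div_mul_div_comm, mul_comm (n.factorial : ℝ)]

theorem map_add_map_add_le_of_convexOn {𝕜 : Type*} [Field 𝕜] [LinearOrder 𝕜]
    [IsStrictOrderedRing 𝕜] {s : Set 𝕜} {f : 𝕜 → 𝕜} (hf : ConvexOn 𝕜 s f) {x y t : 𝕜}
    (hx : x ∈ s) (hyt : y + t ∈ s) (hxy : x ≤ y) (ht : 0 ≤ t) :
    f y + f (x + t) ≤ f x + f (y + t) := by
  rcases hxy.eq_or_lt with rfl | hlt
  · rfl
  have gap_pos : 0 < y - x + t := by linarith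
  set p := t / (y - x + t)
  set q := (y - x) / (y - x + t)
  have hp : 0 ≤ p := by positivity
  have hq : 0 ≤ q := div_nonneg (by linarith) gap_pos.le
  have hpq : p + q = 1 := by
    simp only [p, q]
    field_simp
    ring
  have t_eq : t = p * (y - x + t) := (div_mul_cancel₀ _ gap_pos.ne').symm
  have y_eq : p • x + q • (y + t) = y := by
    simp only [smul_eq_mul]
    linear_combination t_eq + (y + t) * hpq
  have xt_eq : q • x + p • (y + t) = x + t := by
    simp only [smul_eq_mul]
    linear_combination x * hpq - t_eq
  have f_y_le := hf.2 hx hyt hp hq hpq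
  have f_xt_le := hf.2 hx hyt hq hp (by rw [add_comm, hpq])
  rw [y_eq] at f_y_le
  rw [xt_eq] at f_xt_le
  simp only [smul_eq_mul] at f_y_le f_xt_le
  linear_combination f_y_le + f_xt_le + (f x + f (y + t)) * hpq

theorem antitoneOn_Gamma_div_Gamma_add {s : ℝ} (hs : 0 ≤ s) :
    AntitoneOn (fun x => Real.Gamma x / Real.Gamma (x + s)) (Ioi 0) := by
  intro x hx y hy hxy
  rw [mem_Ioi] at hx hy
  have Gamma_x := Real.Gamma_pos_of_pos hx
  have Gamma_y := Real.Gamma_pos_of_pos hy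
  have Gamma_xs : 0 < Real.Gamma (x + s) := Real.Gamma_pos_of_pos (by positivity)
  have Gamma_ys : 0 < Real.Gamma (y + s) := Real.Gamma_pos_of_pos (by positivity)
  have log_le := map_add_map_add_le_of_convexOn Real.convexOn_log_Gamma (mem_Ioi.2 hx)
    (mem_Ioi.2 (by positivity : 0 < y + s)) hxy hs
  simp only [Function.comp_apply] at log_le
  rw [← Real.log_mul Gamma_y.ne' Gamma_xs.ne', ← Real.log_mul Gamma_x.ne' Gamma_ys.ne',
    Real.log_le_log_iff (by positivity) (by positivity)] at log_le
  exact (div_le_div_iff₀ Gamma_ys Gamma_xs).2 log_le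

theorem Gamma_div_Gamma_add_add_nat_le {x₀ x s : ℝ} (hx₀ : 0 < x₀) (hx : x₀ ≤ x) (hs : 0 ≤ s)
    (n : ℕ) :
    Real.Gamma x / Real.Gamma (x + (s + n)) ≤
      Real.Gamma x₀ * invGammaConst (x₀ + s) * (2 ^ n / n.factorial) :=
  calc Real.Gamma x / Real.Gamma (x + (s + n))
      ≤ Real.Gamma x₀ / Real.Gamma (x₀ + (s + n)) :=
        antitoneOn_Gamma_div_Gamma_add (by positivity) hx₀ (hx₀.trans_le hx) hx
    _ = Real.Gamma x₀ * (Real.Gamma (x₀ + s + n))⁻¹ := by rw [div_eq_mul_inv, add_assoc]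
    _ ≤ Real.Gamma x₀ * (invGammaConst (x₀ + s) * (2 ^ n / n.factorial)) := by
        gcongr
        exact inv_Gamma_add_nat_le (by positivity) n
    _ = Real.Gamma x₀ * invGammaConst (x₀ + s) * (2 ^ n / n.factorial) := by rw [mul_assoc]

section GammaSeries

variable {α β γ : ℝ}

theorem dCoef_nonneg (hγ : -1 < γ) (k : ℕ) : 0 ≤ dCoef γ k := by
  refine mul_nonneg (by positivity) (Finset.sum_nonneg fun i _ => ?_)
  have Gamma_pos : 0 < Real.Gamma (γ + i + 1) :=
    Real.Gamma_pos_of_pos (by linarith [i.cast_nonneg (α := ℝ)])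
  positivity

theorem dCoef_mul_factorial_eq (γ : ℝ) (k : ℕ) :
    dCoef γ k * k.factorial =
      4 ^ k * ∑ i ∈ Finset.range (k + 1), 2 ^ i * k.choose i * (Real.Gamma (γ + 1 + i))⁻¹ := by
  rw [dCoef, mul_assoc, Finset.sum_mul]
  congr 1
  refine Finset.sum_congr rfl fun i hi => ?_
  rw [Nat.cast_choose ℝ (Finset.mem_range_succ_iff.1 hi), add_right_comm]
  field_simp

theorem dCoef_mul_factorial_le (hγ : -1 < γ) (k : ℕ) :
    dCoef γ k * k.factorial ≤ invGammaConst (γ + 1) * 20 ^ k := by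
  have ha : 0 < γ + 1 := by linarith
  have := invGammaConst_pos ha
  have inv_Gamma_le (i : ℕ) : (Real.Gamma (γ + 1 + i))⁻¹ ≤ invGammaConst (γ + 1) * 2 ^ i :=
    (inv_Gamma_add_nat_le ha i).trans <| by
      gcongr
      exact div_le_self (by positivity) (Nat.one_le_cast.2 i.factorial_pos)
  calc dCoef γ k * k.factorial
      = 4 ^ k * ∑ i ∈ Finset.range (k + 1), 2 ^ i * k.choose i * (Real.Gamma (γ + 1 + i))⁻¹ :=
        dCoef_mul_factorial_eq γ k
    _ ≤ 4 ^ k * ∑ i ∈ Finset.range (k + 1),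
          2 ^ i * k.choose i * (invGammaConst (γ + 1) * 2 ^ i) := by
        gcongr with i
        exact inv_Gamma_le i
    _ = invGammaConst (γ + 1) * (4 ^ k * ∑ i ∈ Finset.range (k + 1), (4 : ℝ) ^ i * k.choose i) := by
        rw [mul_left_comm, Finset.mul_sum _ _ (invGammaConst _)]
        congr! 2 with i
        rw [show (4 : ℝ) = 2 * 2 by norm_num, mul_pow]
        ring
    _ = invGammaConst (γ + 1) * (4 ^ k * (4 + 1) ^ k) := by simp [add_pow]
    _ = invGammaConst (γ + 1) * 20 ^ k := by
        rw [← mul_pow]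
        norm_num

/-- The summand of index `k = m + j` of the series attached to the parameter `m`; the shift by `m`
lets `j` range over all of `ℕ`. -/
noncomputable def gammaSeriesTerm (α β γ : ℝ) (m j : ℕ) : ℝ :=
  dCoef γ (m + j) * ((m + j).factorial : ℝ) * Real.Gamma (α + γ + (m + j) + 1) /
    ((2 : ℝ) ^ (m + j) * Real.Gamma (α + γ + (m + j) + β + m + 2) *
      Real.Gamma (((m + j : ℕ) : ℝ) + α - m + 1))

theorem gammaSeriesTerm_eq (α β γ : ℝ) (m j : ℕ) :
    gammaSeriesTerm α β γ m j =
      dCoef γ (m + j) * (m + j).factorial / 2 ^ (m + j) *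
        (Real.Gamma (α + γ + (m + j) + 1) /
          Real.Gamma (α + γ + (m + j) + 1 + (β + 1 + m))) *
        (Real.Gamma (α + 1 + j))⁻¹ := by
  rw [gammaSeriesTerm,
    show α + γ + (m + j) + β + m + 2 = α + γ + (m + j) + 1 + (β + 1 + m) by ring,
    show ((m + j : ℕ) : ℝ) + α - m + 1 = α + 1 + j by push_cast; ring]
  field_simp

theorem gammaSeriesTerm_nonneg (hα : -1 < α) (hβ : -1 < β) (hγ : -1 < γ) {m : ℕ} (hm : 1 ≤ m)
    (j : ℕ) : 0 ≤ gammaSeriesTerm α β γ m j := by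
  have hm' : (1 : ℝ) ≤ m := by exact_mod_cast hm
  have hα' : 0 < α + 1 := by linarith
  have hβ' : 0 < β + 1 := by linarith
  have hx : 0 < α + γ + (m + j) + 1 := by linarith [j.cast_nonneg (α := ℝ)]
  have := dCoef_nonneg hγ (m + j)
  rw [gammaSeriesTerm_eq]
  positivity

/-- A constant with
`gammaSeriesTerm α β γ m j ≤ gammaSeriesConst α β γ * (20 ^ m / m!) * (20 ^ j / j!)`
for all `m ≥ 1` and all `j`, when `α, β, γ > -1`: the product of the constants bounding the three
factors in `gammaSeriesTerm_eq`. -/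
noncomputable def gammaSeriesConst (α β γ : ℝ) : ℝ :=
  invGammaConst (γ + 1) * (Real.Gamma (α + γ + 2) * invGammaConst (α + γ + 2 + (β + 1))) *
    invGammaConst (α + 1)

theorem gammaSeriesConst_pos (hα : -1 < α) (hβ : -1 < β) (hγ : -1 < γ) :
    0 < gammaSeriesConst α β γ :=
  mul_pos
    (mul_pos (invGammaConst_pos (by linarith))
      (mul_pos (Real.Gamma_pos_of_pos (by linarith)) (invGammaConst_pos (by linarith))))
    (invGammaConst_pos (by linarith))

theorem gammaSeriesTerm_le (hα : -1 < α) (hβ : -1 < β) (hγ : -1 < γ) {m : ℕ} (hm : 1 ≤ m)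
    (j : ℕ) :
    gammaSeriesTerm α β γ m j ≤
      gammaSeriesConst α β γ * (20 ^ m / m.factorial) * (20 ^ j / j.factorial) := by
  have hm' : (1 : ℝ) ≤ m := by exact_mod_cast hm
  have hα' : 0 < α + 1 := by linarith
  have hβ' : 0 < β + 1 := by linarith
  have hx₀ : 0 < α + γ + 2 := by linarith
  have hx : α + γ + 2 ≤ α + γ + (m + j) + 1 := by linarith [j.cast_nonneg (α := ℝ)]
  have := hx₀.trans_le hx
  have := invGammaConst_pos (show 0 < γ + 1 by linarith)
  have := invGammaConst_pos (add_pos hx₀ hβ')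
  calc gammaSeriesTerm α β γ m j
      = dCoef γ (m + j) * (m + j).factorial / 2 ^ (m + j) *
          (Real.Gamma (α + γ + (m + j) + 1) /
            Real.Gamma (α + γ + (m + j) + 1 + (β + 1 + m))) *
          (Real.Gamma (α + 1 + j))⁻¹ := gammaSeriesTerm_eq α β γ m j
    _ ≤ invGammaConst (γ + 1) * 20 ^ (m + j) / 2 ^ (m + j) *
          (Real.Gamma (α + γ + 2) * invGammaConst (α + γ + 2 + (β + 1)) * (2 ^ m / m.factorial)) *
          (invGammaConst (α + 1) * (2 ^ j / j.factorial)) := by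
        gcongr ?_ / _ * ?_ * ?_
        · exact dCoef_mul_factorial_le hγ (m + j)
        · exact Gamma_div_Gamma_add_add_nat_le hx₀ hx hβ'.le m
        · exact inv_Gamma_add_nat_le hα' j
    _ = gammaSeriesConst α β γ * (20 ^ m / m.factorial) * (20 ^ j / j.factorial) := by
        rw [gammaSeriesConst, pow_add, pow_add]
        field_simp

theorem gammaSeriesTerm_le_exp (hα : -1 < α) (hβ : -1 < β) (hγ : -1 < γ) {m : ℕ} (hm : 1 ≤ m)
    (j : ℕ) :
    gammaSeriesTerm α β γ m j ≤
      gammaSeriesConst α β γ * Real.exp 20 * (20 ^ j / j.factorial) := by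
  have := gammaSeriesConst_pos hα hβ hγ
  refine (gammaSeriesTerm_le hα hβ hγ hm j).trans ?_
  gcongr
  exact Real.pow_div_factorial_le_exp 20 (by norm_num) m

theorem stmt14_general (hα : -1 < α) (hβ : -1 < β) (hγ : -1 < γ) :
    ∃ C : ℝ, 0 < C ∧ ∀ m : ℕ, 1 ≤ m →
      Summable (gammaSeriesTerm α β γ m) ∧ ∑' j, gammaSeriesTerm α β γ m j ≤ C := by
  have const_pos := gammaSeriesConst_pos hα hβ hγ
  have hasSum_majorant :
      HasSum (fun j : ℕ => gammaSeriesConst α β γ * Real.exp 20 * (20 ^ j / j.factorial))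
        (gammaSeriesConst α β γ * Real.exp 20 * Real.exp 20) := by
    rw [Real.exp_eq_exp_ℝ]
    exact (NormedSpace.expSeries_div_hasSum_exp (20 : ℝ)).mul_left _
  refine ⟨gammaSeriesConst α β γ * Real.exp 20 * Real.exp 20, by positivity, fun m hm => ?_⟩
  have term_le := gammaSeriesTerm_le_exp hα hβ hγ hm
  have summable_term : Summable (gammaSeriesTerm α β γ m) :=
    hasSum_majorant.summable.of_nonneg_of_le (gammaSeriesTerm_nonneg hα hβ hγ hm) term_le
  exact ⟨summable_term, hasSum_le term_le summable_term.hasSum hasSum_majorant⟩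

end GammaSeries

theorem stmt14 (α β γ : ℝ) (hα : α ∈ Set.Ioo (-1 : ℝ) 0)
    (hβ : β ∈ Set.Icc (-(1 : ℝ) / 2) (1 / 2)) (hγ : γ ∈ Set.Icc (-(1 : ℝ) / 2) (1 / 2)) :
    ∃ C : ℝ, 0 < C ∧ ∀ m : ℕ, 1 ≤ m →
      Summable (fun j : ℕ => dCoef γ (m + j) * ((m + j).factorial : ℝ) *
        Real.Gamma (α + γ + (m + j) + 1) /
        ((2 : ℝ) ^ (m + j) * Real.Gamma (α + γ + (m + j) + β + m + 2) *
          Real.Gamma (((m + j : ℕ) : ℝ) + α - m + 1))) ∧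
      (∑' j : ℕ, dCoef γ (m + j) * ((m + j).factorial : ℝ) *
        Real.Gamma (α + γ + (m + j) + 1) /
        ((2 : ℝ) ^ (m + j) * Real.Gamma (α + γ + (m + j) + β + m + 2) *
          Real.Gamma (((m + j : ℕ) : ℝ) + α - m + 1))) ≤ C :=
  stmt14_general hα.1 (by linarith [hβ.1]) (by linarith [hγ.1])
end

section
/- Let β,γ > -1. There exists a constant C > 0 such that for all integers m ≥ 1: δ'_m(β,γ)·Γ(β+m+1) = √((β+γ+2m+1)·Γ(β+γ+m+1)·Γ(β+m+1)/(m!·Γ(γ+m+1))) ≤ C·m^{β+1/2}. -/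
open Real MeasureTheory Set Filter

open Asymptotics

/-!
Euler's limit formula `m ^ s * m! / (s (s + 1) ⋯ (s + m)) → Γ(s)` says exactly that
`Γ(s + m + 1) ~ m! * m ^ s` for `s > 0`, and the functional equation carries this down to every
real `s`. In `δ'_m ^ 2` the powers `m ^ (β + γ)`, `m ^ β` and `m ^ γ` then cancel, leaving
`δ'_m ~ √(2 m) / m!`, so that `δ'_m * Γ(β + m + 1) ~ √2 * m ^ (β + 1 / 2)`.
-/

lemma Gamma_add_natCast_eq_mul_prod {s : ℝ} (hs : ∀ k : ℕ, s ≠ -k) (n : ℕ) :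
    Real.Gamma (s + n) = Real.Gamma s * ∏ j ∈ Finset.range n, (s + j) := by
  induction n with
  | zero => simp
  | succ k ih =>
    have hsk : s + k ≠ 0 := fun h ↦ hs k (eq_neg_of_add_eq_zero_left h)
    rw [Finset.prod_range_succ, ← mul_assoc, ← ih, Nat.cast_succ, ← add_assoc,
      Real.Gamma_add_one hsk, mul_comm]

lemma isEquivalent_natCast_add_const (c : ℝ) :
    (fun m : ℕ ↦ (m : ℝ) + c) ~[atTop] fun m : ℕ ↦ (m : ℝ) :=
  IsEquivalent.refl.add_isLittleO <|
    (isLittleO_const_id_atTop c).comp_tendsto tendsto_natCast_atTop_atTop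

lemma isEquivalent_Gamma_add_natCast_add_one_of_pos {s : ℝ} (hs : 0 < s) :
    (fun m : ℕ ↦ Real.Gamma (s + m + 1)) ~[atTop] fun m ↦ m.factorial * (m : ℝ) ^ s := by
  have hΓ : Real.Gamma s ≠ 0 := (Real.Gamma_pos_of_pos hs).ne'
  have hlim : Tendsto (fun m : ℕ ↦ Real.Gamma s / Real.GammaSeq s m) atTop (nhds 1) := by
    simpa only [div_self hΓ] using!
      (tendsto_const_nhds (x := Real.Gamma s)).div (Real.GammaSeq_tendsto_Gamma s) hΓ
  have hpole : ∀ k : ℕ, s ≠ -k := fun k ↦ by linarith [k.cast_nonneg (α := ℝ)]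
  refine isEquivalent_of_tendsto_one (hlim.congr fun m ↦ ?_)
  rw [Pi.div_apply, add_assoc, ← Nat.cast_succ, Gamma_add_natCast_eq_mul_prod hpole,
    Real.GammaSeq, div_div_eq_mul_div, mul_comm (m.factorial : ℝ)]

lemma isEquivalent_Gamma_add_natCast_add_one (s : ℝ) :
    (fun m : ℕ ↦ Real.Gamma (s + m + 1)) ~[atTop] fun m ↦ m.factorial * (m : ℝ) ^ s := by
  obtain ⟨n, hn⟩ := exists_nat_gt (-s)
  induction n generalizing s with
  | zero => exact isEquivalent_Gamma_add_natCast_add_one_of_pos (by simpa using hn)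
  | succ n ih =>
    have hshift := (ih (s + 1) (by push_cast at hn; linarith)).div
      (isEquivalent_natCast_add_const (s + 1))
    refine (hshift.congr_left ?_).congr_right ?_
    · filter_upwards [eventually_gt_atTop (n + 1)] with m hm
      have hsm : s + m + 1 ≠ 0 := by
        have : ((n + 1 : ℕ) : ℝ) < m := by exact_mod_cast hm
        linarith
      rw [Pi.div_apply, add_right_comm s, Real.Gamma_add_one hsm,
        show (m : ℝ) + (s + 1) = s + m + 1 by ring, mul_div_cancel_left₀ _ hsm]
    · filter_upwards [eventually_gt_atTop 0] with m hm
      have hm₀ : (m : ℝ) ≠ 0 := by positivity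
      rw [Pi.div_apply, Real.rpow_add_one hm₀, ← mul_assoc, mul_div_cancel_right₀ _ hm₀]

lemma isEquivalent_sqrt {α : Type*} {l : Filter α} {u v : α → ℝ} (hv : 0 ≤ v)
    (huv : u ~[l] v) : (fun x ↦ √(u x)) ~[l] fun x ↦ √(v x) := by
  simpa only [Real.sqrt_eq_rpow] using! huv.rpow hv (r := 1 / 2)

lemma isEquivalent_jacobiDelta (β γ : ℝ) :
    jacobiDelta β γ ~[atTop] fun m ↦ √(2 * m) / m.factorial := by
  have hlinear : (fun m : ℕ ↦ β + γ + 2 * m + 1) ~[atTop] fun m ↦ 2 * (m : ℝ) :=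
    ((IsEquivalent.refl (u := fun _ : ℕ ↦ (2 : ℝ))).mul
      (isEquivalent_natCast_add_const ((β + γ + 1) / 2))).congr_left
      (.of_forall fun m ↦ by simp only [Pi.mul_apply]; ring)
  have hradicand :
      (fun m : ℕ ↦ (β + γ + 2 * m + 1) * Real.Gamma (β + γ + m + 1) /
        (m.factorial * Real.Gamma (β + m + 1) * Real.Gamma (γ + m + 1)))
      ~[atTop] fun m ↦ 2 * (m : ℝ) / (m.factorial : ℝ) ^ 2 := by
    refine ((hlinear.mul (isEquivalent_Gamma_add_natCast_add_one (β + γ))).div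
      ((IsEquivalent.refl.mul (isEquivalent_Gamma_add_natCast_add_one β)).mul
        (isEquivalent_Gamma_add_natCast_add_one γ))).congr_right ?_
    filter_upwards [eventually_gt_atTop 0] with m hm
    have hm₀ : (0 : ℝ) < m := by exact_mod_cast hm
    simp only [Pi.div_apply, Pi.mul_apply, Real.rpow_add hm₀]
    field_simp
  refine (isEquivalent_sqrt (fun m ↦ by positivity) hradicand).congr_right
    (.of_forall fun m ↦ ?_)
  beta_reduce
  rw [Real.sqrt_div' _ (by positivity), Real.sqrt_sq (by positivity)]

lemma isEquivalent_jacobiDelta_mul_Gamma (β γ : ℝ) :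
    (fun m : ℕ ↦ jacobiDelta β γ m * Real.Gamma (β + m + 1))
      ~[atTop] fun m ↦ √2 * (m : ℝ) ^ (β + 1 / 2) := by
  refine ((isEquivalent_jacobiDelta β γ).mul
    (isEquivalent_Gamma_add_natCast_add_one β)).congr_right ?_
  filter_upwards [eventually_gt_atTop 0] with m hm
  have hm₀ : (0 : ℝ) < m := by exact_mod_cast hm
  rw [Pi.mul_apply, Real.sqrt_mul zero_le_two, Real.rpow_add hm₀, ← Real.sqrt_eq_rpow]
  field_simp

lemma jacobiDelta_mul_Gamma_eq_sqrt {β : ℝ} {m : ℕ} (hβm : 0 < β + m + 1) (γ : ℝ) :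
    jacobiDelta β γ m * Real.Gamma (β + m + 1) =
      √((β + γ + 2 * m + 1) * Real.Gamma (β + γ + m + 1) * Real.Gamma (β + m + 1) /
        (m.factorial * Real.Gamma (γ + m + 1))) := by
  have hΓ : 0 < Real.Gamma (β + m + 1) := Real.Gamma_pos_of_pos hβm
  rw [jacobiDelta, ← Real.sqrt_mul_self hΓ.le, ← Real.sqrt_mul' _ (by positivity),
    Real.sqrt_mul_self hΓ.le]
  congr 1
  field_simp

theorem stmt18_general (β γ : ℝ) (hβ : -2 < β) :
    ∃ C : ℝ, 0 < C ∧ ∀ m : ℕ, 1 ≤ m →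
      jacobiDelta β γ m * Real.Gamma (β + m + 1) =
        √((β + γ + 2 * m + 1) * Real.Gamma (β + γ + m + 1) * Real.Gamma (β + m + 1) /
          (m.factorial * Real.Gamma (γ + m + 1))) ∧
      jacobiDelta β γ m * Real.Gamma (β + m + 1) ≤ C * (m : ℝ) ^ (β + 1 / 2) := by
  have hbigO : (fun m : ℕ ↦ jacobiDelta β γ m * Real.Gamma (β + m + 1))
      =O[atTop] fun m ↦ (m : ℝ) ^ (β + 1 / 2) :=
    (isEquivalent_jacobiDelta_mul_Gamma β γ).isBigO.trans (isBigO_const_mul_self _ _ _)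
  obtain ⟨C, hC, hbound⟩ := bound_of_isBigO_nat_atTop hbigO
  refine ⟨C, hC, fun m hm ↦ ?_⟩
  have hm₁ : (1 : ℝ) ≤ m := by exact_mod_cast hm
  have hpow : 0 < (m : ℝ) ^ (β + 1 / 2) := by positivity
  refine ⟨jacobiDelta_mul_Gamma_eq_sqrt (by linarith) γ, (le_abs_self _).trans ?_⟩
  simpa only [Real.norm_eq_abs, abs_of_pos hpow] using hbound hpow.ne'

theorem stmt18 (β γ : ℝ) (hβ : -1 < β) (hγ : -1 < γ) :
    ∃ C : ℝ, 0 < C ∧ ∀ m : ℕ, 1 ≤ m →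
      jacobiDelta β γ m * Real.Gamma (β + m + 1) =
        Real.sqrt ((β + γ + 2 * m + 1) * Real.Gamma (β + γ + m + 1) * Real.Gamma (β + m + 1) /
          (m.factorial * Real.Gamma (γ + m + 1))) ∧
      jacobiDelta β γ m * Real.Gamma (β + m + 1) ≤ C * (m : ℝ) ^ (β + 1 / 2) := by
  exact stmt18_general β γ (by linarith)
end
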